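/- arXiv:2011.13639 — 3 statements merged into one kernel-verified Lean document; each statement's English description precedes it below -/
import Mathlib

section
/- Let δ ∈ ℝ. Then (𝒱(•,δ), d_δ) is a complete metric space, and 𝒱_K(•,δ) is dense in it; that is, 𝒱(•,δ) is the completion of 𝒱_K(•,δ) under the metric d_δ. -/
open Filter Topology TopologicalSpace Set Polynomial

noncomputable section

namespace PaperPCZar

variable {K : Type*} [Field K]

/-- `expNeg γ = e^{-γ}` for `γ ∈ ℝ ∪ {∞}`, with `e^{-∞} = 0`. -/
def expNeg (γ : WithTop ℝ) : ℝ := WithTop.recTopCoe 0 (fun r => Real.exp (-r)) γ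

/-- `v` is a rank-one (i.e. nontrivial, real-valued) valuation. -/
def IsRankOne (v : AddValuation K (WithTop ℝ)) : Prop := ∃ x : K, v x ≠ 0 ∧ v x ≠ ⊤

/-- The value group `Γ_v` of `v`, as a subset of `ℝ`. -/
def valueGroup (v : AddValuation K (WithTop ℝ)) : Set ℝ := {r : ℝ | ∃ x : K, v x = (r : WithTop ℝ)}

/-- `ℚΓ_v = {q·γ : q ∈ ℚ, γ ∈ Γ_v}`, the divisible hull of the value group inside `ℝ`. -/
def QGamma (v : AddValuation K (WithTop ℝ)) : Set ℝ :=
  {r : ℝ | ∃ (q : ℚ) (γ : ℝ), γ ∈ valueGroup v ∧ r = q * γ}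

/-- Order convergence of a sequence in `ℝ ∪ {∞}` to `γ`. -/
def OrdLim (f : ℕ → WithTop ℝ) (γ : WithTop ℝ) : Prop :=
  (∀ a : WithTop ℝ, a < γ → ∀ᶠ n in atTop, a < f n) ∧
  (∀ b : WithTop ℝ, γ < b → ∀ᶠ n in atTop, f n < b)

/-- `s` is a pseudo-convergent sequence with respect to `v`. -/
def IsPC (v : AddValuation K (WithTop ℝ)) (s : ℕ → K) : Prop :=
  ∀ n, v (s (n + 1) - s n) < v (s (n + 2) - s (n + 1))

/-- `s` is a pseudo-divergent sequence with respect to `v`. -/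
def IsPD (v : AddValuation K (WithTop ℝ)) (s : ℕ → K) : Prop :=
  ∀ n, v (s (n + 1) - s (n + 2)) < v (s n - s (n + 1))

/-- `s` is a pseudo-stationary sequence with respect to `v`. -/
def IsPS (v : AddValuation K (WithTop ℝ)) (s : ℕ → K) : Prop :=
  ∀ n m n' m' : ℕ, n ≠ m → n' ≠ m' → v (s n - s m) = v (s n' - s m')

/-- `δ ∈ ℝ ∪ {∞}` is the breadth of the sequence `s`, i.e. `δ = lim_n v(s_{n+1} - s_n)`. -/
def IsBreadth (v : AddValuation K (WithTop ℝ)) (s : ℕ → K) (δ : WithTop ℝ) : Prop :=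
  OrdLim (fun n => v (s (n + 1) - s n)) δ

/-- `α ∈ K` is a pseudo-limit of the pseudo-convergent sequence `s`. -/
def IsPCLimit (v : AddValuation K (WithTop ℝ)) (s : ℕ → K) (α : K) : Prop :=
  ∀ n, v (α - s n) < v (α - s (n + 1))

/-- `α ∈ K` is a pseudo-limit of the pseudo-divergent sequence `s`. -/
def IsPDLimit (v : AddValuation K (WithTop ℝ)) (s : ℕ → K) (α : K) : Prop :=
  ∀ n, v (α - s (n + 1)) < v (α - s n)

/-- `β ∈ K̄` is a pseudo-limit of `s ⊆ K` with respect to an extension `u` of `v`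
to the algebraic closure of `K`. -/
def IsPCLimitAC (u : AddValuation (AlgebraicClosure K) (WithTop ℝ)) (s : ℕ → K)
    (β : AlgebraicClosure K) : Prop :=
  ∀ n, u (β - algebraMap K (AlgebraicClosure K) (s n)) <
    u (β - algebraMap K (AlgebraicClosure K) (s (n + 1)))

/-- `s` is of transcendental type: for every polynomial `f`, `v(f(s_n))` eventually
stabilizes. -/
def IsTranscendentalType (v : AddValuation K (WithTop ℝ)) (s : ℕ → K) : Prop :=
  ∀ f : Polynomial K, ∃ N, ∀ n ≥ N, v (f.eval (s n)) = v (f.eval (s N))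

/-- The ultrametric distance `d(x,y) = e^{-v(x-y)}` on `K`. -/
def dK (v : AddValuation K (WithTop ℝ)) (x y : K) : ℝ := expNeg (v (x - y))

/-- The set `V_E = {φ ∈ K(X) : φ(s_n) ∈ V for all but finitely many n}`. -/
def VESet (v : AddValuation K (WithTop ℝ)) (s : ℕ → K) : Set (RatFunc K) :=
  {φ : RatFunc K | ∀ᶠ n in atTop, 0 ≤ v (RatFunc.eval (RingHom.id K) (s n) φ)}

/-- `Zar(K(X)|V)`: the valuation subrings of `K(X)` containing (the image of) `V`. -/
def ZarSet (v : AddValuation K (WithTop ℝ)) : Set (ValuationSubring (RatFunc K)) :=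
  {W | ∀ x : K, 0 ≤ v x → algebraMap K (RatFunc K) x ∈ W}

/-- `𝒱`: valuation subrings of `K(X)` of the form `V_E`, `E` pseudo-convergent. -/
def VV (v : AddValuation K (WithTop ℝ)) : Set (ValuationSubring (RatFunc K)) :=
  {W | ∃ s : ℕ → K, IsPC v s ∧ (W : Set (RatFunc K)) = VESet v s}

/-- `𝒱(•,δ)`: those `V_E` with `E` pseudo-convergent of breadth `δ`. -/
def VVδ (v : AddValuation K (WithTop ℝ)) (δ : WithTop ℝ) : Set (ValuationSubring (RatFunc K)) :=
  {W | ∃ s : ℕ → K, IsPC v s ∧ IsBreadth v s δ ∧ (W : Set (RatFunc K)) = VESet v s}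

/-- `𝒱_K(•,δ)`: those `V_E` with `E` pseudo-convergent of breadth `δ` having a
pseudo-limit in `K`. -/
def VVKδ (v : AddValuation K (WithTop ℝ)) (δ : WithTop ℝ) : Set (ValuationSubring (RatFunc K)) :=
  {W | ∃ s : ℕ → K, IsPC v s ∧ IsBreadth v s δ ∧ (∃ α : K, IsPCLimit v s α) ∧
    (W : Set (RatFunc K)) = VESet v s}

/-- `𝒱(β,•)`: those `V_E` with `E` pseudo-convergent having `β ∈ K̄` as a pseudo-limit
with respect to `u`. -/
def VVβ (v : AddValuation K (WithTop ℝ)) (u : AddValuation (AlgebraicClosure K) (WithTop ℝ))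
    (β : AlgebraicClosure K) : Set (ValuationSubring (RatFunc K)) :=
  {W | ∃ s : ℕ → K, IsPC v s ∧ IsPCLimitAC u s β ∧ (W : Set (RatFunc K)) = VESet v s}

/-- `𝒱(β,•)` for a pseudo-limit `β ∈ K`. -/
def VVβK (v : AddValuation K (WithTop ℝ)) (β : K) : Set (ValuationSubring (RatFunc K)) :=
  {W | ∃ s : ℕ → K, IsPC v s ∧ IsPCLimit v s β ∧ (W : Set (RatFunc K)) = VESet v s}

/-- `𝒱_div`: those `V_E` with `E` pseudo-divergent. -/
def VVdiv (v : AddValuation K (WithTop ℝ)) : Set (ValuationSubring (RatFunc K)) :=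
  {W | ∃ s : ℕ → K, IsPD v s ∧ (W : Set (RatFunc K)) = VESet v s}

/-- `𝒱_div(•,δ)`: those `V_E` with `E` pseudo-divergent of breadth `δ`. -/
def VVdivδ (v : AddValuation K (WithTop ℝ)) (δ : WithTop ℝ) : Set (ValuationSubring (RatFunc K)) :=
  {W | ∃ s : ℕ → K, IsPD v s ∧ IsBreadth v s δ ∧ (W : Set (RatFunc K)) = VESet v s}

/-- `𝒱_div(β,•)`: those `V_E` with `E` pseudo-divergent having `β ∈ K` as a pseudo-limit. -/
def VVdivβ (v : AddValuation K (WithTop ℝ)) (β : K) : Set (ValuationSubring (RatFunc K)) :=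
  {W | ∃ s : ℕ → K, IsPD v s ∧ IsPDLimit v s β ∧ (W : Set (RatFunc K)) = VESet v s}

/-- `𝒱_stat(•,δ)`: those `V_E` with `E` pseudo-stationary of breadth `δ`. -/
def VVstatδ (v : AddValuation K (WithTop ℝ)) (δ : WithTop ℝ) :
    Set (ValuationSubring (RatFunc K)) :=
  {W | ∃ s : ℕ → K, (∀ n m : ℕ, n ≠ m → v (s n - s m) = δ) ∧
    (W : Set (RatFunc K)) = VESet v s}

/-- `𝒱_stat(β,•)`: those `V_E` with `E` pseudo-stationary having `β` as a pseudo-limit. -/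
def VVstatβ (v : AddValuation K (WithTop ℝ)) (β : K) : Set (ValuationSubring (RatFunc K)) :=
  {W | ∃ (s : ℕ → K) (δ : WithTop ℝ), (∀ n m : ℕ, n ≠ m → v (s n - s m) = δ) ∧
    (∀ n, δ ≤ v (β - s n)) ∧ (W : Set (RatFunc K)) = VESet v s}

/-- The Zariski topology on the valuation subrings of a field `L`, generated by the
sets `B(φ) = {W : φ ∈ W}`. -/
def zarTop (L : Type*) [Field L] : TopologicalSpace (ValuationSubring L) :=
  generateFrom {U | ∃ φ : L, U = {W : ValuationSubring L | φ ∈ W}}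

/-- The constructible topology on the valuation subrings of a field `L`: the coarsest
topology in which all finite intersections `B(φ₁) ∩ ⋯ ∩ B(φ_k)` are open and closed. -/
def consTop (L : Type*) [Field L] : TopologicalSpace (ValuationSubring L) :=
  generateFrom {U | ∃ T : Finset L, U = {W : ValuationSubring L | ∀ φ ∈ T, φ ∈ W} ∨
    U = {W : ValuationSubring L | ∀ φ ∈ T, φ ∈ W}ᶜ}

/-- The subspace Zariski topology on a set of valuation subrings. -/
def zarSub {L : Type*} [Field L] (S : Set (ValuationSubring L)) : TopologicalSpace ↥S :=
  (zarTop L).induced Subtype.val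

/-- The subspace constructible topology on a set of valuation subrings. -/
def consSub {L : Type*} [Field L] (S : Set (ValuationSubring L)) : TopologicalSpace ↥S :=
  (consTop L).induced Subtype.val

/-- `d` is a metric on `X` inducing the topology `t`. -/
def MetrizedBy {X : Type*} (t : TopologicalSpace X) (d : X → X → ℝ) : Prop :=
  (∀ x y, d x y = d y x) ∧ (∀ x y, d x y = 0 ↔ x = y) ∧
  (∀ x y z, d x z ≤ d x y + d y z) ∧
  t = generateFrom {U : Set X | ∃ (x : X) (ε : ℝ), 0 < ε ∧ U = {y | d x y < ε}}

/-- The topology `t` is metrizable. -/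
def IsMetrizable {X : Type*} (t : TopologicalSpace X) : Prop := ∃ d, MetrizedBy t d

/-- The topology `t` is induced by an ultrametric. -/
def IsUltrametrizable {X : Type*} (t : TopologicalSpace X) : Prop :=
  ∃ d, MetrizedBy t d ∧ ∀ x y z, d x z ≤ max (d x y) (d y z)

/-- `dd` computes the distance `d_δ` on `𝒱(•,δ)`:
`d_δ(V_E, V_F) = lim_n max (d(s_n,t_n) - e^{-δ}) 0`. -/
def IsDistδ (v : AddValuation K (WithTop ℝ)) (δ : WithTop ℝ)
    (dd : ValuationSubring (RatFunc K) → ValuationSubring (RatFunc K) → ℝ) : Prop :=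
  ∀ (W W' : ValuationSubring (RatFunc K)) (s t : ℕ → K),
    IsPC v s → IsBreadth v s δ → (W : Set (RatFunc K)) = VESet v s →
    IsPC v t → IsBreadth v t δ → (W' : Set (RatFunc K)) = VESet v t →
    Tendsto (fun n => max (dK v (s n) (t n) - expNeg δ) 0) atTop (𝓝 (dd W W'))

/-- The `Λ`-upper limit topology on the interval `(-∞, b] ⊆ ℝ ∪ {∞}`, generated by the
half-open intervals `(α, λ]` with `λ ∈ Λ ∪ {∞}`. -/
def upperTopWT (b : WithTop ℝ) (Λ : Set ℝ) : TopologicalSpace {γ : WithTop ℝ // γ ≤ b} :=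
  generateFrom {U | ∃ α lam : WithTop ℝ, α ≤ b ∧
    (lam = ⊤ ∨ ∃ r ∈ Λ, lam = (r : WithTop ℝ)) ∧
    U = {γ : {γ : WithTop ℝ // γ ≤ b} | α < (γ : WithTop ℝ) ∧ (γ : WithTop ℝ) ≤ lam}}

/-- The `Λ`-upper limit topology on `(-∞, +∞] = ℝ ∪ {∞}`. -/
def upperTopAll (Λ : Set ℝ) : TopologicalSpace (WithTop ℝ) :=
  generateFrom {U | ∃ α lam : WithTop ℝ,
    (lam = ⊤ ∨ ∃ r ∈ Λ, lam = (r : WithTop ℝ)) ∧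
    U = {γ : WithTop ℝ | α < γ ∧ γ ≤ lam}}

/-- The `Λ`-upper limit topology on an interval `(a, b]` of `ℝ ∪ {±∞}`. -/
def upperTopE (a b : EReal) (Λ : Set ℝ) : TopologicalSpace {x : EReal // a < x ∧ x ≤ b} :=
  generateFrom {U | ∃ α lam : EReal, (a < α ∧ α ≤ b) ∧
    (lam = ⊤ ∨ ∃ r ∈ Λ, lam = (r : EReal)) ∧
    U = {x : {x : EReal // a < x ∧ x ≤ b} | α < (x : EReal) ∧ (x : EReal) ≤ lam}}


/-- `𝒲`: the valuation domains of the valuations `w_E : φ ↦ lim_n v(φ(s_n))`, as `E`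
ranges over the pseudo-convergent sequences for which `w_E` is a valuation. -/
def WW (v : AddValuation K (WithTop ℝ)) : Set (ValuationSubring (RatFunc K)) :=
  {W | ∃ (s : ℕ → K) (w : AddValuation (RatFunc K) (WithTop ℝ)), IsPC v s ∧
    (∀ φ : RatFunc K, OrdLim (fun n => v (RatFunc.eval (RingHom.id K) (s n) φ)) (w φ)) ∧
    (W : Set (RatFunc K)) = {φ : RatFunc K | 0 ≤ w φ}}

/-!
A pseudo-convergent sequence `s` need not have a pseudo-limit in `K`, but the class of `s` in an
ultrapower of `K` behaves like one. Write `γ n = v (s (n + 1) - s n)`. The Taylor expansion of a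
polynomial `f` at `s m`, with `m > n`, has terms of value `c i m + i * γ n` at `s n`, where `c i m`
is the value of the `i`-th Hasse derivative of `f` at `s m`. Regarding `c i` as a hyperreal, these
are affine functions of `γ n` with distinct slopes, so that one of them is eventually the strict
minimum. Hence `v (f (s n))` is eventually affine in `γ n`; the intercept is real because the left
hand side does not involve `m`. So `v (φ (s n))` has eventually constant sign for every rational
function `φ`, and `V_E` is the pullback of the ultrapower of `V` along `X ↦ [s]`.

The new sequences needed for completeness and for density are of the form `x j + c j`, where
`v (c j) = γ j` for the gauge `γ` of a given sequence of breadth `δ` and where `v (x j - x i) > γ i`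
for `i ≤ j`: such a sequence is pseudo-convergent with gauge `γ` again. For a Cauchy sequence
`V_{E_n}`, the center `x j` is a term of one of the `E_n`, and `v (y - x j) > γ j` for `y` in a tail
of almost every `E_n`. For density all `x j` are the same term of `E`, which is then a pseudo-limit.
-/

section EventualComparison

theorem eventually_lt_or_eventually_gt_of_strictMono {α : Type*} [LinearOrder α] {f : ℕ → α}
    (hf : StrictMono f) (a : α) : (∀ᶠ n in atTop, f n < a) ∨ ∀ᶠ n in atTop, a < f n := by
  by_cases h : ∃ N, a ≤ f N
  · obtain ⟨N, hN⟩ := h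
    exact .inr <| (eventually_gt_atTop N).mono fun n hn => hN.trans_lt (hf hn)
  · push Not at h
    exact .inl <| .of_forall h

theorem exists_eventually_forall_lt {ι X α : Type*} [Preorder α] {l : Filter X} {g : ι → X → α}
    {S : Finset ι} (hS : S.Nonempty)
    (hg : ∀ i ∈ S, ∀ j ∈ S, i ≠ j → (∀ᶠ x in l, g i x < g j x) ∨ ∀ᶠ x in l, g j x < g i x) :
    ∃ k ∈ S, ∀ᶠ x in l, ∀ i ∈ S, i ≠ k → g k x < g i x := by
  induction hS using Finset.Nonempty.cons_induction with
  | singleton a => exact ⟨a, by simp, by simp⟩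
  | cons a S ha _ ih =>
    simp only [Finset.forall_mem_cons] at hg
    obtain ⟨k, hk, hmin⟩ := ih fun i hi => (hg.2 i hi).2
    rcases hg.1.2 k hk (ne_of_mem_of_not_mem hk ha).symm with hak | hka
    · refine ⟨a, Finset.mem_cons_self a S, ?_⟩
      filter_upwards [hmin, hak] with x hmin hak
      simp only [Finset.forall_mem_cons, ne_eq, not_true_eq_false, false_implies, true_and]
      intro i hi _
      by_cases hik : i = k
      · exact hik ▸ hak
      · exact hak.trans (hmin i hi hik)
    · refine ⟨k, Finset.mem_cons_of_mem hk, ?_⟩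
      filter_upwards [hmin, hka] with x hmin hka
      exact (Finset.forall_mem_cons _ _).2 ⟨fun _ => hka, hmin⟩

variable {R : Type*} [CommRing R] [LinearOrder R] [IsStrictOrderedRing R] {γ : ℕ → R}

theorem eventually_nonneg_or_eventually_neg_add_mul (hγ : StrictMono γ) (a b : R) :
    (∀ᶠ n in atTop, 0 ≤ a + b * γ n) ∨ ∀ᶠ n in atTop, a + b * γ n < 0 := by
  rcases lt_trichotomy b 0 with hb | rfl | hb
  · have hmono : StrictMono fun n => -b * γ n := hγ.const_mul (neg_pos.2 hb)
    refine (eventually_lt_or_eventually_gt_of_strictMono hmono a).imp ?_ ?_ <;>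
      exact fun h => h.mono fun n hn => by linarith
  · exact (le_or_gt 0 a).imp (fun h => .of_forall fun n => by simpa using h)
      fun h => .of_forall fun n => by simpa using h
  · have hmono : StrictMono fun n => b * γ n := hγ.const_mul hb
    refine (eventually_lt_or_eventually_gt_of_strictMono hmono (-a)).symm.imp ?_ ?_ <;>
      exact fun h => h.mono fun n hn => by linarith

theorem exists_eventually_forall_add_natCast_mul_lt (hγ : StrictMono γ) (c : ℕ → R)
    {S : Finset ℕ} (hS : S.Nonempty) :
    ∃ k ∈ S, ∀ᶠ n in atTop, ∀ i ∈ S, i ≠ k → c k + k * γ n < c i + i * γ n := by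
  have eventually_comparable_of_lt {i j : ℕ} (hij : i < j) :
      (∀ᶠ n in atTop, c i + i * γ n < c j + j * γ n) ∨
        ∀ᶠ n in atTop, c j + j * γ n < c i + i * γ n := by
    have hmono : StrictMono fun n => ((j : R) - i) * γ n :=
      hγ.const_mul (sub_pos.2 (Nat.cast_lt.2 hij))
    refine (eventually_lt_or_eventually_gt_of_strictMono hmono (c i - c j)).symm.imp ?_ ?_ <;>
      exact fun h => h.mono fun n hn => by linarith
  refine exists_eventually_forall_lt hS fun i _ j _ hij => ?_
  rcases hij.lt_or_gt with h | h
  · exact eventually_comparable_of_lt h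
  · exact (eventually_comparable_of_lt h).symm

end EventualComparison

section Ultrapower

/-- The ultrapower of a valuation subring `A` of `K`, as a valuation subring of the ultrapower
of `K`. -/
def ultrapowerValuationSubring {ι : Type*} (U : Ultrafilter ι) (A : ValuationSubring K) :
    ValuationSubring (Germ (U : Filter ι) K) where
  carrier := {x | x.LiftPred (· ∈ A)}
  mul_mem' {x y} := Germ.inductionOn₂ x y fun _ _ hx hy => by
    filter_upwards [hx, hy] with i using A.mul_mem _ _
  one_mem' := .of_forall fun _ => A.one_mem
  add_mem' {x y} := Germ.inductionOn₂ x y fun _ _ hx hy => by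
    filter_upwards [hx, hy] with i using A.add_mem _ _
  zero_mem' := .of_forall fun _ => A.zero_mem
  neg_mem' {x} := Germ.inductionOn x fun _ hx => by
    filter_upwards [hx] with i using A.neg_mem _
  mem_or_inv_mem' x := Germ.inductionOn x fun f =>
    Ultrafilter.eventually_or.1 <| .of_forall fun i => A.mem_or_inv_mem (f i)

theorem eventually_cofinite_eval_ne_zero {ι R : Type*} [CommRing R] [IsDomain R] {s : ι → R}
    (hs : Function.Injective s) {f : R[X]} (hf : f ≠ 0) : ∀ᶠ i in cofinite, f.eval (s i) ≠ 0 :=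
  hs.tendsto_cofinite.eventually (p := fun x => f.eval x ≠ 0) <| by
    simpa [Filter.eventually_cofinite] using finite_setOfPred_isRoot hf

variable {ι : Type*} [Infinite ι] {s : ι → K}

theorem nonZeroDivisors_le_comap_evalGerm (hs : Function.Injective s) :
    nonZeroDivisors K[X] ≤ (nonZeroDivisors (Germ (hyperfilter ι : Filter ι) K)).comap
      ((Germ.coeRingHom (hyperfilter ι : Filter ι)).comp
        (RingHom.pi fun i => evalRingHom (s i))) := by
  refine fun f hf => mem_nonZeroDivisors_of_ne_zero fun h => ?_
  have hzero : ∀ᶠ i in hyperfilter ι, f.eval (s i) = 0 := Germ.coe_eq.1 h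
  have hne := hyperfilter_le_cofinite
    (eventually_cofinite_eval_ne_zero hs (nonZeroDivisors.ne_zero hf))
  obtain ⟨i, hi, hi'⟩ := (hzero.and hne).exists
  exact hi' hi

/-- Evaluation of rational functions along an injective family `s`, with values in the ultrapower
`K*` of `K`: the embedding `K(X) → K*` sending `X` to the class of `s`. -/
def evalGerm (hs : Function.Injective s) : RatFunc K →+* Germ (hyperfilter ι : Filter ι) K :=
  RatFunc.liftRingHom _ (nonZeroDivisors_le_comap_evalGerm hs)

theorem evalGerm_apply (hs : Function.Injective s) (φ : RatFunc K) :
    evalGerm hs φ = ((fun i => RatFunc.eval (RingHom.id K) (s i) φ : ι → K) :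
      Germ (hyperfilter ι : Filter ι) K) :=
  (RatFunc.liftRingHom_apply ..).trans rfl

end Ultrapower

section Valuation

theorem exists_coe_eq_of_ne_zero (v : AddValuation K (WithTop ℝ)) {x : K} (hx : x ≠ 0) :
    ∃ r : ℝ, v x = r :=
  (WithTop.ne_top_iff_exists.1 (v.ne_top_iff.2 hx)).imp fun _ => Eq.symm

theorem map_sum_eq_of_forall_lt {R Γ₀ ι : Type*} [Ring R] [LinearOrderedAddCommMonoidWithTop Γ₀]
    (v : AddValuation R Γ₀) {S : Finset ι} {x : ι → R} {k : ι} (hk : k ∈ S) (htop : v (x k) ≠ ⊤)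
    (h : ∀ i ∈ S, i ≠ k → v (x k) < v (x i)) : v (∑ i ∈ S, x i) = v (x k) := by
  classical
  rw [← Finset.add_sum_erase S x hk]
  refine v.map_add_eq_of_lt_left (v.map_lt_sum htop fun i hi => ?_)
  exact h i (Finset.mem_of_mem_erase hi) (Finset.ne_of_mem_erase hi)

theorem finite_setOf_hasseDeriv_ne_zero {R : Type*} [Semiring R] (f : R[X]) :
    {i | hasseDeriv i f ≠ 0}.Finite :=
  (Set.finite_le_nat f.natDegree).subset fun i hi => not_lt.1 fun hlt =>
    hi (hasseDeriv_eq_zero_of_lt_natDegree f i hlt)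

theorem eval_eq_sum_hasseDeriv {R : Type*} [CommRing R] (f : R[X]) (x y : R) {S : Finset ℕ}
    (hS : ∀ i, hasseDeriv i f ≠ 0 → i ∈ S) :
    f.eval y = ∑ i ∈ S, (hasseDeriv i f).eval x * (y - x) ^ i := by
  have hsupport : (taylor x f).support ⊆ S := fun i hi => hS i fun h => by
    simp [taylor_coeff, h] at hi
  rw [← taylor_eval_sub x, eval_eq_sum, sum_eq_of_subset _ (by simp) hsupport]
  simp only [taylor_coeff]

end Valuation

section PseudoConvergent

variable {v : AddValuation K (WithTop ℝ)} {s : ℕ → K} {γ : ℕ → ℝ} {δ : WithTop ℝ}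

/-- `γ` is the gauge of the pseudo-convergent sequence `s`, i.e. `γ n = v (s (n + 1) - s n)`.
The differences with non-consecutive indices, which have the same values, are included. -/
def IsGauge (v : AddValuation K (WithTop ℝ)) (s : ℕ → K) (γ : ℕ → ℝ) : Prop :=
  StrictMono γ ∧ ∀ ⦃n m⦄, n < m → v (s m - s n) = γ n

theorem IsGauge.of_succ (hγ : StrictMono γ) (h : ∀ n, v (s (n + 1) - s n) = γ n) :
    IsGauge v s γ := by
  refine ⟨hγ, fun n m hnm => ?_⟩
  induction m, hnm using Nat.le_induction with
  | base => exact h n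
  | succ m hnm ih =>
    rw [← sub_add_sub_cancel' (s m) (s n), v.map_add_eq_of_lt_left, ih]
    rw [ih, h]
    exact_mod_cast hγ hnm

theorem IsPC.exists_isGauge (hs : IsPC v s) : ∃ γ, IsGauge v s γ := by
  choose γ hγ using fun n => WithTop.ne_top_iff_exists.1 (ne_top_of_lt (hs n))
  refine ⟨γ, .of_succ (strictMono_nat_of_lt_succ fun n => ?_) fun n => (hγ n).symm⟩
  rw [← WithTop.coe_lt_coe, hγ, hγ]
  exact hs n

namespace IsGauge

theorem isPC (hs : IsGauge v s γ) : IsPC v s := fun n => by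
  rw [hs.2 n.lt_succ_self, hs.2 (n + 1).lt_succ_self]
  exact_mod_cast hs.1 n.lt_succ_self

theorem isBreadth_iff (hs : IsGauge v s γ) :
    IsBreadth v s δ ↔ OrdLim (fun n => (γ n : WithTop ℝ)) δ := by
  simp only [IsBreadth, hs.2 (Nat.lt_succ_self _)]

theorem injective (hs : IsGauge v s γ) : Function.Injective s :=
  .of_lt_imp_ne fun n m hnm h => by
    have := hs.2 hnm
    rw [h, sub_self, v.map_zero] at this
    exact WithTop.top_ne_coe this

theorem eventually_eval_ne_zero (hs : IsGauge v s γ) {f : K[X]} (hf : f ≠ 0) :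
    ∀ᶠ n in atTop, f.eval (s n) ≠ 0 :=
  Nat.cofinite_eq_atTop ▸ eventually_cofinite_eval_ne_zero hs.injective hf

theorem valuation_hasseDeriv_mul_pow (hs : IsGauge v s γ) {f : K[X]} {i n m : ℕ} {c : ℝ}
    (hnm : n < m) (hc : v ((hasseDeriv i f).eval (s m)) = c) :
    v ((hasseDeriv i f).eval (s m) * (s n - s m) ^ i) = (c + i * γ n : ℝ) := by
  rw [v.map_mul, hc, v.map_pow, v.map_sub_swap, hs.2 hnm, ← WithTop.coe_nsmul, nsmul_eq_mul,
    ← WithTop.coe_add]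

theorem valuation_eval_eq_of_forall_lt (hs : IsGauge v s γ) {f : K[X]} {S : Finset ℕ}
    (hS : ∀ i, hasseDeriv i f ≠ 0 → i ∈ S) {c : ℕ → ℝ} {k n m : ℕ} (hk : k ∈ S) (hnm : n < m)
    (hc : ∀ i ∈ S, v ((hasseDeriv i f).eval (s m)) = c i)
    (hmin : ∀ i ∈ S, i ≠ k → c k + k * γ n < c i + i * γ n) :
    v (f.eval (s n)) = (c k + k * γ n : ℝ) := by
  have hterm := fun i hi => hs.valuation_hasseDeriv_mul_pow hnm (hc i hi)
  rw [eval_eq_sum_hasseDeriv f (s m) (s n) hS, ← hterm k hk]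
  refine map_sum_eq_of_forall_lt v hk (by simp only [hterm k hk, ne_eq, WithTop.coe_ne_top,
    not_false_eq_true]) fun i hi hik => ?_
  rw [hterm k hk, hterm i hi]
  exact_mod_cast hmin i hi hik

theorem exists_eventually_hyperfilter_valuation_eval_eq (hs : IsGauge v s γ) {f : K[X]}
    (hf : f ≠ 0) : ∃ (c : ℕ → ℝ) (k : ℕ), ∀ᶠ n in atTop, ∀ᶠ m in hyperfilter ℕ,
      v (f.eval (s n)) = (c m + k * γ n : ℝ) := by
  let S := (finite_setOf_hasseDeriv_ne_zero f).toFinset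
  have mem_S {i} : i ∈ S ↔ hasseDeriv i f ≠ 0 := (finite_setOf_hasseDeriv_ne_zero f).mem_toFinset
  have hS : S.Nonempty := ⟨0, mem_S.2 (by rwa [hasseDeriv_zero'])⟩
  let c (i m : ℕ) : ℝ := (v ((hasseDeriv i f).eval (s m))).untopD 0
  have hc : ∀ᶠ m in atTop, ∀ i ∈ S, v ((hasseDeriv i f).eval (s m)) = c i m := by
    refine (Finset.eventually_all S).2 fun i hi => ?_
    filter_upwards [hs.eventually_eval_ne_zero (mem_S.1 hi)] with m hm
    obtain ⟨r, hr⟩ := exists_coe_eq_of_ne_zero v hm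
    simp only [c, hr, WithTop.untopD_coe]
  have hγ : StrictMono fun n => ((γ n : ℝ) : Germ (hyperfilter ℕ : Filter ℕ) ℝ) :=
    fun n m hnm => Germ.const_lt (hs.1 hnm)
  -- Over `ℝ`, the threshold on `n` could depend on `m`; over the hyperreals it cannot.
  obtain ⟨k, hk, hmin⟩ := exists_eventually_forall_add_natCast_mul_lt hγ
    (fun i => (c i : Germ (hyperfilter ℕ : Filter ℕ) ℝ)) hS
  refine ⟨c k, k, hmin.mono fun n hn => ?_⟩
  have hmin' : ∀ᶠ m in hyperfilter ℕ, ∀ i ∈ S, i ≠ k → c k m + k * γ n < c i m + i * γ n :=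
    (Finset.eventually_all S).2 fun i hi => eventually_imp_distrib_left.2 fun hik =>
      Germ.coe_lt.1 (hn i hi hik)
  filter_upwards [hmin', Nat.hyperfilter_le_atTop hc,
    Nat.hyperfilter_le_atTop (eventually_gt_atTop n)] with m hmin hc hnm
  exact hs.valuation_eval_eq_of_forall_lt (fun i => mem_S.2) hk hnm hc hmin

theorem exists_eventually_valuation_eval_eq (hs : IsGauge v s γ) {f : K[X]} (hf : f ≠ 0) :
    ∃ (c : ℝ) (k : ℕ), ∀ᶠ n in atTop, v (f.eval (s n)) = (c + k * γ n : ℝ) := by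
  obtain ⟨c, k, hck⟩ := hs.exists_eventually_hyperfilter_valuation_eval_eq hf
  obtain ⟨N, hN, hfN⟩ := (hck.and (hs.eventually_eval_ne_zero hf)).exists
  obtain ⟨r, hr⟩ := exists_coe_eq_of_ne_zero v hfN
  refine ⟨r - k * γ N, k, hck.mono fun n hn => ?_⟩
  obtain ⟨m, hmN, hmn⟩ := (hN.and hn).exists
  have hcm : r = c m + k * γ N := WithTop.coe_injective (hr.symm.trans hmN)
  rw [hmn, hcm, add_sub_cancel_right]

theorem exists_eventually_valuation_ratFunc_eval_eq (hs : IsGauge v s γ) {φ : RatFunc K}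
    (hφ : φ ≠ 0) : ∃ c b : ℝ, ∀ᶠ n in atTop,
      v (RatFunc.eval (RingHom.id K) (s n) φ) = (c + b * γ n : ℝ) := by
  obtain ⟨c, k, hnum⟩ := hs.exists_eventually_valuation_eval_eq (RatFunc.num_ne_zero hφ)
  obtain ⟨d, l, hdenom⟩ := hs.exists_eventually_valuation_eval_eq φ.denom_ne_zero
  refine ⟨c - d, k - l, ?_⟩
  filter_upwards [hnum, hdenom] with n hnum hdenom
  rw [RatFunc.eval, eval₂_id, eval₂_id, v.map_div, hnum, hdenom,
    ← WithTop.LinearOrderedAddCommGroup.coe_sub]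
  congr 1
  ring

theorem eventually_valuation_eval_nonneg_or_neg (hs : IsGauge v s γ) (φ : RatFunc K) :
    (∀ᶠ n in atTop, 0 ≤ v (RatFunc.eval (RingHom.id K) (s n) φ)) ∨
      ∀ᶠ n in atTop, v (RatFunc.eval (RingHom.id K) (s n) φ) < 0 := by
  rcases eq_or_ne φ 0 with rfl | hφ
  · exact .inl <| .of_forall fun n => by simp [RatFunc.eval_zero]
  · obtain ⟨c, b, hcb⟩ := hs.exists_eventually_valuation_ratFunc_eval_eq hφ
    refine (eventually_nonneg_or_eventually_neg_add_mul hs.1 c b).imp ?_ ?_ <;>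
    · intro h
      filter_upwards [h, hcb] with n hn hv
      rw [hv]
      exact_mod_cast hn

theorem exists_valuationSubring_eq_VESet (hs : IsGauge v s γ) :
    ∃ W : ValuationSubring (RatFunc K), (W : Set (RatFunc K)) = VESet v s := by
  refine ⟨(ultrapowerValuationSubring (hyperfilter ℕ)
    (AddValuation.toValuation v).valuationSubring).comap (evalGerm hs.injective), ?_⟩
  ext φ
  have hmem : φ ∈ (ultrapowerValuationSubring (hyperfilter ℕ)
      (AddValuation.toValuation v).valuationSubring).comap (evalGerm hs.injective) ↔
      ∀ᶠ n in hyperfilter ℕ, 0 ≤ v (RatFunc.eval (RingHom.id K) (s n) φ) := by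
    rw [ValuationSubring.mem_comap, evalGerm_apply]
    rfl
  refine hmem.trans ⟨fun h => ?_, fun h => Nat.hyperfilter_le_atTop h⟩
  refine (hs.eventually_valuation_eval_nonneg_or_neg φ).resolve_right fun hneg => ?_
  obtain ⟨n, hn, hn'⟩ := (h.and (Nat.hyperfilter_le_atTop hneg)).exists
  exact hn'.not_ge hn

end IsGauge

end PseudoConvergent

section ExpNeg

theorem expNeg_strictAnti : StrictAnti expNeg := by
  intro a b hab
  obtain ⟨r, rfl⟩ := WithTop.ne_top_iff_exists.1 (ne_top_of_lt hab)
  cases b with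
  | top => exact Real.exp_pos _
  | coe s => exact Real.exp_lt_exp.2 (neg_lt_neg (WithTop.coe_lt_coe.1 hab))

theorem expNeg_nonneg (a : WithTop ℝ) : 0 ≤ expNeg a :=
  expNeg_strictAnti.antitone le_top

theorem exists_expNeg_coe_eq {x : ℝ} (hx : 0 < x) : ∃ r : ℝ, expNeg r = x :=
  ⟨-Real.log x, (congrArg Real.exp (neg_neg _)).trans (Real.exp_log hx)⟩

theorem exists_coe_lt_expNeg_sub_expNeg_lt (δ : WithTop ℝ) {ε : ℝ} (hε : 0 < ε) :
    ∃ r : ℝ, r < δ ∧ expNeg r - expNeg δ < ε := by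
  obtain ⟨r, hr⟩ := exists_expNeg_coe_eq (add_pos_of_nonneg_of_pos (expNeg_nonneg δ) (half_pos hε))
  refine ⟨r, expNeg_strictAnti.lt_iff_gt.1 ?_, ?_⟩ <;> linarith

end ExpNeg

section Distance

variable {v : AddValuation K (WithTop ℝ)} {δ r : WithTop ℝ} {s t : ℕ → K} {γ : ℕ → ℝ}
  {W W' : ValuationSubring (RatFunc K)}
  {dd : ValuationSubring (RatFunc K) → ValuationSubring (RatFunc K) → ℝ}

theorem lt_of_strictMono_of_ordLim (hγ : StrictMono γ)
    (hlim : OrdLim (fun n => (γ n : WithTop ℝ)) δ) (n : ℕ) : γ n < δ := by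
  by_contra! hδ
  have hlt := hlim.2 (γ (n + 1)) (hδ.trans_lt (by exact_mod_cast hγ n.lt_succ_self))
  obtain ⟨m, hm, hnm⟩ := (hlt.and (eventually_gt_atTop n)).exists
  exact hm.not_ge (WithTop.coe_le_coe.2 (hγ.monotone hnm))

/-- `W = V_E` for the pseudo-convergent sequence `E = s` of breadth `δ`; thus `𝒱(•,δ)` consists of
the `W` that are represented by some `s`. -/
def Represents (v : AddValuation K (WithTop ℝ)) (δ : WithTop ℝ) (s : ℕ → K)
    (W : ValuationSubring (RatFunc K)) : Prop :=
  IsPC v s ∧ IsBreadth v s δ ∧ (W : Set (RatFunc K)) = VESet v s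

theorem Represents.exists_isGauge (h : Represents v δ s W) :
    ∃ γ, IsGauge v s γ ∧ OrdLim (fun n => (γ n : WithTop ℝ)) δ :=
  h.1.exists_isGauge.imp fun _ hs => ⟨hs, hs.isBreadth_iff.1 h.2.1⟩

theorem IsGauge.exists_represents (hs : IsGauge v s γ)
    (hγ : OrdLim (fun n => (γ n : WithTop ℝ)) δ) : ∃ W, Represents v δ s W :=
  hs.exists_valuationSubring_eq_VESet.imp fun _ hW => ⟨hs.isPC, hs.isBreadth_iff.2 hγ, hW⟩

theorem Represents.exists_eventually_lt (h : Represents v δ s W) (hr : r < δ) :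
    ∃ x, ∀ᶠ k in atTop, r < v (s k - x) := by
  obtain ⟨γ, hs, hγ⟩ := h.exists_isGauge
  obtain ⟨M, hM⟩ := (hγ.1 r hr).exists
  refine ⟨s M, (eventually_gt_atTop M).mono fun k hk => ?_⟩
  rwa [hs.2 hk]

namespace IsDistδ

theorem tendsto (hdd : IsDistδ v δ dd) (hs : Represents v δ s W) (ht : Represents v δ t W') :
    Tendsto (fun n => max (dK v (s n) (t n) - expNeg δ) 0) atTop (𝓝 (dd W W')) :=
  hdd W W' s t hs.1 hs.2.1 hs.2.2 ht.1 ht.2.1 ht.2.2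

theorem eventually_lt_of_lt (hdd : IsDistδ v δ dd) (hs : Represents v δ s W)
    (ht : Represents v δ t W') (h : dd W W' < expNeg r - expNeg δ) :
    ∀ᶠ k in atTop, r < v (s k - t k) := by
  filter_upwards [(hdd.tendsto hs ht).eventually_lt_const h] with k hk
  exact expNeg_strictAnti.lt_iff_gt.1 (sub_lt_sub_iff_right _ |>.1 (max_lt_iff.1 hk).1)

theorem le_of_eventually_le (hdd : IsDistδ v δ dd) (hs : Represents v δ s W)
    (ht : Represents v δ t W') (hr : r ≤ δ) (h : ∀ᶠ k in atTop, r ≤ v (s k - t k)) :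
    dd W W' ≤ expNeg r - expNeg δ := by
  refine le_of_tendsto (hdd.tendsto hs ht) (h.mono fun k hk => ?_)
  exact max_le (sub_le_sub_right (expNeg_strictAnti.antitone hk) _)
    (sub_nonneg.2 (expNeg_strictAnti.antitone hr))

theorem exists_forall_ge_eventually_lt (hdd : IsDistδ v δ dd)
    {f : ℕ → ValuationSubring (RatFunc K)} {s : ℕ → ℕ → K} (hs : ∀ n, Represents v δ (s n) (f n))
    (hf : ∀ ε : ℝ, 0 < ε → ∃ N, ∀ m ≥ N, ∀ n ≥ N, dd (f m) (f n) < ε) (hr : r < δ) :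
    ∃ x N, ∀ n ≥ N, ∀ᶠ k in atTop, r < v (s n k - x) := by
  obtain ⟨N, hN⟩ := hf _ (sub_pos.2 (expNeg_strictAnti hr))
  obtain ⟨x, hx⟩ := (hs N).exists_eventually_lt hr
  refine ⟨x, N, fun n hn => ?_⟩
  filter_upwards [hx, hdd.eventually_lt_of_lt (hs n) (hs N) (hN n hn N le_rfl)] with k hx hnN
  rw [← sub_add_sub_cancel]
  exact v.map_lt_add hnN hx

end IsDistδ

section Recentering

variable {x c : ℕ → K}

theorem isGauge_centers_add (hγ : StrictMono γ) (hc : ∀ j, v (c j) = γ j)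
    (hx : ∀ j, γ j < v (x (j + 1) - x j)) : IsGauge v (fun j => x j + c j) γ := by
  refine .of_succ hγ fun j => ?_
  have hlt : v (c j) < v (c (j + 1)) := by
    rw [hc, hc]
    exact_mod_cast hγ j.lt_succ_self
  have hcsub : v (c (j + 1) - c j) = γ j := (v.map_sub_eq_of_lt_right hlt).trans (hc j)
  rw [add_sub_add_comm, v.map_add_eq_of_lt_right (hcsub ▸ hx j), hcsub]

theorem le_map_centers_add_sub (hγ : Monotone γ) (hc : ∀ j, v (c j) = γ j)
    (hx : ∀ ⦃i j⦄, i ≤ j → γ i < v (x j - x i)) {i j : ℕ} (hij : i ≤ j) :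
    γ i ≤ v (x j + c j - x i) := by
  rw [add_sub_right_comm]
  exact v.map_le_add (hx hij).le ((WithTop.coe_le_coe.2 (hγ hij)).trans_eq (hc j).symm)

end Recentering

theorem IsDistδ.exists_mem_VVδ_forall_lt (hdd : IsDistδ v δ dd)
    {f : ℕ → ValuationSubring (RatFunc K)} (hfmem : ∀ n, f n ∈ VVδ v δ)
    (hf : ∀ ε : ℝ, 0 < ε → ∃ N, ∀ m ≥ N, ∀ n ≥ N, dd (f m) (f n) < ε) :
    ∃ W ∈ VVδ v δ, ∀ ε : ℝ, 0 < ε → ∃ N, ∀ n ≥ N, dd (f n) W < ε := by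
  have hrep (n : ℕ) : ∃ s, Represents v δ s (f n) := hfmem n
  choose s hs using hrep
  obtain ⟨γ, hs₀, hγ⟩ := (hs 0).exists_isGauge
  have hγδ (j : ℕ) : γ j < δ := lt_of_strictMono_of_ordLim hs₀.1 hγ j
  choose x N hxN using fun j => hdd.exists_forall_ge_eventually_lt hs hf (hγδ j)
  have hx ⦃i j : ℕ⦄ (hij : i ≤ j) : γ i < v (x j - x i) := by
    have hγij : (γ i : WithTop ℝ) ≤ γ j := WithTop.coe_le_coe.2 (hs₀.1.monotone hij)
    obtain ⟨k, hi, hj⟩ := ((hxN i _ (le_max_left _ (N j))).and (hxN j _ (le_max_right _ _))).exists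
    rw [← sub_sub_sub_cancel_left]
    exact (lt_min hi (hγij.trans_lt hj)).trans_le (v.map_sub _ _)
  have hc (j : ℕ) : v (s 0 (j + 1) - s 0 j) = γ j := hs₀.2 j.lt_succ_self
  obtain ⟨W, hW⟩ := (isGauge_centers_add hs₀.1 hc fun j => hx j.le_succ).exists_represents hγ
  refine ⟨W, ⟨_, hW⟩, fun ε hε => ?_⟩
  obtain ⟨r, hrδ, hr⟩ := exists_coe_lt_expNeg_sub_expNeg_lt δ hε
  obtain ⟨j, hj⟩ := (hγ.1 r hrδ).exists
  refine ⟨N j, fun n hn => (hdd.le_of_eventually_le (hs n) hW hrδ.le ?_).trans_lt hr⟩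
  filter_upwards [hxN j n hn, eventually_ge_atTop j] with k hk hjk
  rw [← sub_sub_sub_cancel_right _ _ (x j)]
  exact hj.le.trans (v.map_le_sub hk.le (le_map_centers_add_sub hs₀.1.monotone hc hx hjk))

theorem IsDistδ.exists_mem_VVKδ_lt (hdd : IsDistδ v δ dd) (hW : W ∈ VVδ v δ) {ε : ℝ}
    (hε : 0 < ε) : ∃ W' ∈ VVKδ v δ, dd W W' < ε := by
  obtain ⟨s, hs⟩ : ∃ s, Represents v δ s W := hW
  obtain ⟨γ, hsγ, hγ⟩ := hs.exists_isGauge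
  obtain ⟨r, hrδ, hr⟩ := exists_coe_lt_expNeg_sub_expNeg_lt δ hε
  obtain ⟨N, hN⟩ := (hγ.1 r hrδ).exists
  have hc (j : ℕ) : v (s (j + 1) - s j) = γ j := hsγ.2 j.lt_succ_self
  have ht : IsGauge v (fun j => s N + (s (j + 1) - s j)) γ :=
    isGauge_centers_add hsγ.1 hc fun j => by simp
  obtain ⟨W', hW'⟩ := ht.exists_represents hγ
  have hlimit : IsPCLimit v (fun j => s N + (s (j + 1) - s j)) (s N) := fun n => by
    simp only [sub_add_cancel_left, v.map_neg, hc]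
    exact_mod_cast hsγ.1 n.lt_succ_self
  refine ⟨W', ⟨_, hW'.1, hW'.2.1, ⟨_, hlimit⟩, hW'.2.2⟩,
    (hdd.le_of_eventually_le hs hW' hrδ.le ?_).trans_lt hr⟩
  filter_upwards [eventually_gt_atTop N] with k hk
  rw [← sub_sub]
  refine hN.le.trans (v.map_le_sub (hsγ.2 hk).ge ?_)
  exact (WithTop.coe_le_coe.2 (hsγ.1.monotone hk.le)).trans_eq (hc k).symm

end Distance

theorem statement2_general (v : AddValuation K (WithTop ℝ)) (δ : WithTop ℝ)
    (dd : ValuationSubring (RatFunc K) → ValuationSubring (RatFunc K) → ℝ)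
    (hdd : IsDistδ v δ dd) :
    (∀ f : ℕ → ValuationSubring (RatFunc K), (∀ n, f n ∈ VVδ v δ) →
      (∀ ε : ℝ, 0 < ε → ∃ N, ∀ m ≥ N, ∀ n ≥ N, dd (f m) (f n) < ε) →
      ∃ W ∈ VVδ v δ, ∀ ε : ℝ, 0 < ε → ∃ N, ∀ n ≥ N, dd (f n) W < ε) ∧
    (∀ W ∈ VVδ v δ, ∀ ε : ℝ, 0 < ε → ∃ W' ∈ VVKδ v δ, dd W W' < ε) :=
  ⟨fun _ hfmem hf => hdd.exists_mem_VVδ_forall_lt hfmem hf,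
    fun _ hW _ hε => hdd.exists_mem_VVKδ_lt hW hε⟩

/-- For `δ ∈ ℝ`, `(𝒱(•,δ), d_δ)` is a complete metric space in which
`𝒱_K(•,δ)` is dense; that is, `𝒱(•,δ)` is the completion of `𝒱_K(•,δ)` under `d_δ`. -/
theorem statement2 (v : AddValuation K (WithTop ℝ)) (hv : IsRankOne v)
    (δ : ℝ)
    (dd : ValuationSubring (RatFunc K) → ValuationSubring (RatFunc K) → ℝ)
    (hdd : IsDistδ v (δ : WithTop ℝ) dd) :
    (∀ f : ℕ → ValuationSubring (RatFunc K), (∀ n, f n ∈ VVδ v (δ : WithTop ℝ)) →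
      (∀ ε : ℝ, 0 < ε → ∃ N, ∀ m ≥ N, ∀ n ≥ N, dd (f m) (f n) < ε) →
      ∃ W ∈ VVδ v (δ : WithTop ℝ), ∀ ε : ℝ, 0 < ε → ∃ N, ∀ n ≥ N, dd (f n) W < ε) ∧
    (∀ W ∈ VVδ v (δ : WithTop ℝ), ∀ ε : ℝ, 0 < ε →
      ∃ W' ∈ VVKδ v (δ : WithTop ℝ), dd W W' < ε) :=
  statement2_general v δ dd hdd

end PaperPCZar
end
end

section
/- Let δ ∈ ℝ∪{∞}. The closure of 𝒱(•,δ) in 𝒱 with respect to the Zariski topology is equal to the union ⋃_{δ'≤δ} 𝒱(•,δ') over all δ' ∈ ℝ∪{∞} with δ' ≤ δ. -/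
open Filter Topology TopologicalSpace Set Polynomial

noncomputable section

namespace PaperPCZar

variable {K : Type*} [Field K]

/-!
Let `E = {s_n}` be pseudo-convergent. Over an algebraic closure of `K`, to which `v` extends, every
root `β` of a polynomial eventually satisfies `v (s_n - β) ≤ v (s_{n+1} - s_n)`; hence a rational
function has constant valuation on the ball `{x | v (s_{n+1} - s_n) < v (x - s_n)}` for large `n`,
and finitely many elements of `V_E` are `V`-valued on a common such ball. If the breadth `δ'` of `E`
is finite, the value group is dense, so for `δ' < δ` the ball contains a pseudo-convergent sequence
`s_n + c_m` with `v c_m` increasing to `δ`. This puts `V_E` in the closure of `𝒱(•,δ)`.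

Conversely, `(X - s_n) / (s_{n+1} - s_n)` belongs to `V_E`, and it belongs to `V_F` only if the
breadth of `F` is at least `v (s_{n+1} - s_n)`. So if `V_E` is in the closure of `𝒱(•,δ)`, then
`v (s_{n+1} - s_n) ≤ δ` for all `n`, that is, `δ' ≤ δ`.
-/

section PseudoConvergent

theorem map_eval_of_splits {L Γ₀ : Type*} [CommRing L] [IsDomain L]
    [LinearOrderedCommMonoidWithZero Γ₀] {v : Valuation L Γ₀} {f : L[X]} (hf : f.Splits) (x : L) :
    v (f.eval x) = v f.leadingCoeff * (f.roots.map fun β => v (x - β)).prod := by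
  rw [hf.eval_eq_prod_roots, map_mul, map_multiset_prod, Multiset.map_map]
  rfl

theorem eventually_mul_pow_le_or_ge {M : Type*} [CommMonoid M] [LinearOrder M] [IsOrderedMonoid M]
    {g : ℕ → M} (hg : Antitone g) (c d : M) (k l : ℕ) :
    (∀ᶠ n in atTop, c * g n ^ k ≤ d * g n ^ l) ∨ ∀ᶠ n in atTop, d * g n ^ l ≤ c * g n ^ k := by
  wlog hkl : k ≤ l generalizing c d k l
  · exact (this d c l k (le_of_not_ge hkl)).symm
  obtain ⟨m, rfl⟩ := Nat.exists_eq_add_of_le hkl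
  have hfactor : ∀ n, d * g n ^ (k + m) = d * g n ^ m * g n ^ k := fun n => by
    rw [pow_add, mul_assoc, mul_comm (g n ^ k)]
  simp only [hfactor]
  by_cases! hle : ∀ n, c ≤ d * g n ^ m
  · exact .inl (.of_forall fun n => mul_le_mul_left (hle n) _)
  · obtain ⟨N, hN⟩ := hle
    refine .inr ((eventually_ge_atTop N).mono fun n hn => mul_le_mul_left ?_ _)
    exact (mul_le_mul_right (pow_le_pow_left' (hg hn) m) d).trans hN.le

/-- A pseudo-convergent sequence with respect to a valuation in multiplicative notation: the
distances between consecutive terms strictly decrease. It is the general notion behind `IsPC`,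
needed because an extension of a valuation of `K` to `AlgebraicClosure K` comes with its own,
abstract value group. -/
def IsPseudoConvergent {R Γ₀ : Type*} [Ring R] [LinearOrderedCommMonoidWithZero Γ₀]
    (v : Valuation R Γ₀) (t : ℕ → R) : Prop :=
  ∀ n, v (t (n + 2) - t (n + 1)) < v (t (n + 1) - t n)

namespace IsPseudoConvergent

section Ring

variable {R Γ₀ : Type*} [Ring R] [LinearOrderedCommMonoidWithZero Γ₀] {v : Valuation R Γ₀}
  {t : ℕ → R}

theorem strictAnti_map_sub (ht : IsPseudoConvergent v t) :
    StrictAnti fun n => v (t (n + 1) - t n) :=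
  strictAnti_nat_of_succ_lt ht

theorem map_sub_of_lt (ht : IsPseudoConvergent v t) {n m : ℕ} (hnm : n < m) :
    v (t m - t n) = v (t (n + 1) - t n) := by
  induction m, hnm using Nat.le_induction with
  | base => rfl
  | succ m hnm ih =>
    have hlt : v (t (m + 1) - t m) < v (t m - t n) := ih.symm ▸ ht.strictAnti_map_sub hnm
    rw [← sub_add_sub_cancel _ (t m), v.map_add_eq_of_lt_right hlt, ih]

theorem injective (ht : IsPseudoConvergent v t) : Function.Injective t := by
  refine Function.Injective.of_lt_imp_ne fun n m hnm heq => ?_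
  have hpos : 0 < v (t (n + 1) - t n) := zero_le.trans_lt (ht n)
  rw [← ht.map_sub_of_lt hnm, heq, sub_self, map_zero] at hpos
  exact hpos.false

theorem map_sub_eq_or_eventually_eq (ht : IsPseudoConvergent v t) (z : R) :
    (∀ n, v (t n - z) = v (t (n + 1) - t n)) ∨
      ∃ c, ∀ᶠ n in atTop, v (t n - z) = c ∧ v (t (n + 1) - t n) < c := by
  by_cases! hfar : ∃ N, v (t (N + 1) - t N) < v (t N - z)
  · obtain ⟨N, hN⟩ := hfar
    refine .inr ⟨v (t N - z), ?_⟩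
    filter_upwards [eventually_gt_atTop N] with n hn
    refine ⟨?_, (ht.strictAnti_map_sub hn).trans hN⟩
    rw [← sub_add_sub_cancel _ (t N), v.map_add_eq_of_lt_right]
    rwa [ht.map_sub_of_lt hn]
  · refine .inl fun n => ?_
    have hlt : v (t (n + 1) - z) < v (t (n + 1) - t n) := (hfar (n + 1)).trans_lt (ht n)
    rw [← sub_sub_sub_cancel_left _ _ (t (n + 1)), v.map_sub_eq_of_lt_right hlt]

theorem eventually_le_map_sub (ht : IsPseudoConvergent v t) (z : R) :
    ∀ᶠ n in atTop, v (t (n + 1) - t n) ≤ v (t n - z) := by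
  rcases ht.map_sub_eq_or_eventually_eq z with hclose | ⟨c, hfar⟩
  · exact .of_forall fun n => (hclose n).ge
  · filter_upwards [hfar] with n hn
    exact hn.1 ▸ hn.2.le

theorem algebraMap_comp {R A Γ₀ Γ₁ : Type*} [CommRing R] [Ring A] [Algebra R A]
    [LinearOrderedCommMonoidWithZero Γ₀] [LinearOrderedCommMonoidWithZero Γ₁] {v : Valuation R Γ₀}
    {t : ℕ → R} (ht : IsPseudoConvergent v t) (w : Valuation A Γ₁) [v.HasExtension w] :
    IsPseudoConvergent w fun n => algebraMap R A (t n) := fun n => by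
  simpa only [← map_sub, Valuation.HasExtension.val_map_lt_iff v] using ht n

end Ring

section Splits

variable {L Γ₀ : Type*} [CommRing L] [IsDomain L] [LinearOrderedCommMonoidWithZero Γ₀]
  {v : Valuation L Γ₀} {t : ℕ → L} {f : L[X]}

theorem eventually_map_eval_eq_of_splits (ht : IsPseudoConvergent v t) (hf : f.Splits) :
    ∀ᶠ n in atTop, ∀ x, v (x - t n) < v (t (n + 1) - t n) → v (f.eval x) = v (f.eval (t n)) := by
  classical
  have hroots : ∀ᶠ n in atTop, ∀ β ∈ f.roots.toFinset, v (t (n + 1) - t n) ≤ v (t n - β) :=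
    (eventually_all_finset _).2 fun β _ => ht.eventually_le_map_sub β
  filter_upwards [hroots] with n hn x hx
  have hfactor : ∀ β ∈ f.roots, v (x - β) = v (t n - β) := fun β hβ => by
    rw [← sub_add_sub_cancel _ (t n),
      v.map_add_eq_of_lt_right (hx.trans_le (hn β (Multiset.mem_toFinset.2 hβ)))]
  simp only [map_eval_of_splits hf, Multiset.map_congr rfl hfactor]

theorem eventually_map_eval_eq_mul_pow_of_splits (ht : IsPseudoConvergent v t) (hf : f.Splits) :
    ∃ (c : Γ₀) (k : ℕ), ∀ᶠ n in atTop, v (f.eval (t n)) = c * v (t (n + 1) - t n) ^ k := by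
  suffices hprod : ∀ S : Multiset L, ∃ (c : Γ₀) (k : ℕ), ∀ᶠ n in atTop,
      (S.map fun β => v (t n - β)).prod = c * v (t (n + 1) - t n) ^ k by
    obtain ⟨c, k, hck⟩ := hprod f.roots
    refine ⟨v f.leadingCoeff * c, k, hck.mono fun n hn => ?_⟩
    rw [map_eval_of_splits hf, hn, mul_assoc]
  intro S
  induction S using Multiset.induction_on with
  | empty => exact ⟨1, 0, by simp⟩
  | cons β S ih =>
    obtain ⟨c, k, hck⟩ := ih
    rcases ht.map_sub_eq_or_eventually_eq β with hclose | ⟨d, hfar⟩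
    · refine ⟨c, k + 1, hck.mono fun n hn => ?_⟩
      rw [Multiset.map_cons, Multiset.prod_cons, hclose, hn, pow_succ', mul_left_comm]
    · refine ⟨d * c, k, ?_⟩
      filter_upwards [hck, hfar] with n hn hd
      rw [Multiset.map_cons, Multiset.prod_cons, hd.1, hn, mul_assoc]

end Splits

end IsPseudoConvergent

section Extension

variable {Γ₀ : Type*} [LinearOrderedCommGroupWithZero Γ₀] (v : Valuation K Γ₀)

theorem exists_hasExtension_valuation (L : Type*) [Field L] [Algebra K L] :
    ∃ A : ValuationSubring L, v.HasExtension A.valuation := by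
  obtain ⟨A, hA, hlocal⟩ := IsLocalRing.exists_factor_valuationRing
    ((algebraMap K L).comp v.valuationSubring.subtype)
  refine ⟨A, .ofComapInteger (Subring.ext fun x => ?_)⟩
  rw [Subring.mem_comap, A.integer_valuation, A.mem_toSubring, Valuation.mem_integer_iff,
    ← v.mem_valuationSubring_iff]
  refine ⟨fun hx => ?_, fun hx => hA ⟨x, hx⟩⟩
  by_contra hx'
  have hinv : x⁻¹ ∈ v.valuationSubring := (v.valuationSubring.mem_or_inv_mem x).resolve_left hx'
  have hx0 : x ≠ 0 := fun h => hx' (h ▸ zero_mem _)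
  obtain ⟨y, hy⟩ := (hlocal.map_nonunit ⟨x⁻¹, hinv⟩
    (.of_mul_eq_one ⟨algebraMap K L x, hx⟩ (Subtype.ext (by simp [hx0])))).exists_right_inv
  have hxy : x = y := (inv_mul_eq_one₀ hx0).1 (congrArg Subtype.val hy)
  exact hx' (hxy ▸ y.2)

variable {v} {t : ℕ → K}

theorem IsPseudoConvergent.eventually_map_eval_eq (ht : IsPseudoConvergent v t) (f : K[X]) :
    ∀ᶠ n in atTop, ∀ x, v (x - t n) < v (t (n + 1) - t n) → v (f.eval x) = v (f.eval (t n)) := by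
  obtain ⟨A, hA⟩ := exists_hasExtension_valuation v (AlgebraicClosure K)
  filter_upwards [(ht.algebraMap_comp A.valuation).eventually_map_eval_eq_of_splits
    (IsAlgClosed.splits (f.map (algebraMap K _)))] with n hn x hx
  simpa only [eval_map_algebraMap, ← map_sub, aeval_algebraMap_apply,
    Valuation.HasExtension.val_map_lt_iff v, Valuation.HasExtension.val_map_eq_iff v,
    coe_aeval_eq_eval, hx, true_imp_iff] using hn (algebraMap K _ x)

theorem IsPseudoConvergent.eventually_map_eval_le_or_ge (ht : IsPseudoConvergent v t)
    (f g : K[X]) :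
    (∀ᶠ n in atTop, v (f.eval (t n)) ≤ v (g.eval (t n))) ∨
      ∀ᶠ n in atTop, v (g.eval (t n)) ≤ v (f.eval (t n)) := by
  obtain ⟨A, hA⟩ := exists_hasExtension_valuation v (AlgebraicClosure K)
  have hext := ht.algebraMap_comp A.valuation
  obtain ⟨c, k, hf⟩ := hext.eventually_map_eval_eq_mul_pow_of_splits
    (IsAlgClosed.splits (f.map (algebraMap K _)))
  obtain ⟨d, l, hg⟩ := hext.eventually_map_eval_eq_mul_pow_of_splits
    (IsAlgClosed.splits (g.map (algebraMap K _)))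
  simp only [eval_map_algebraMap, aeval_algebraMap_apply, coe_aeval_eq_eval] at hf hg
  simp only [← Valuation.HasExtension.val_map_le_iff v A.valuation]
  refine (eventually_mul_pow_le_or_ge hext.strictAnti_map_sub.antitone c d k l).imp ?_ ?_ <;>
  · intro hle
    filter_upwards [hf, hg, hle] with n hfn hgn hn
    rwa [hfn, hgn]

end Extension

end PseudoConvergent

section RatFunc

theorem eventually_cofinite_eval_ne_zero_s5 {f : K[X]} (hf : f ≠ 0) :
    ∀ᶠ x in cofinite, f.eval₂ (RingHom.id K) x ≠ 0 := by
  filter_upwards [(finite_setOfPred_isRoot hf).eventually_cofinite_notMem] with x hx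
  rwa [eval₂_id]

theorem eventually_cofinite_ratFunc_eval_add (φ ψ : RatFunc K) :
    ∀ᶠ x in cofinite, (φ + ψ).eval (RingHom.id K) x =
      φ.eval (RingHom.id K) x + ψ.eval (RingHom.id K) x := by
  filter_upwards [eventually_cofinite_eval_ne_zero_s5 φ.denom_ne_zero,
    eventually_cofinite_eval_ne_zero_s5 ψ.denom_ne_zero] with x hφ hψ
  exact RatFunc.eval_add _ _ hφ hψ

theorem eventually_cofinite_ratFunc_eval_mul (φ ψ : RatFunc K) :
    ∀ᶠ x in cofinite, (φ * ψ).eval (RingHom.id K) x =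
      φ.eval (RingHom.id K) x * ψ.eval (RingHom.id K) x := by
  filter_upwards [eventually_cofinite_eval_ne_zero_s5 φ.denom_ne_zero,
    eventually_cofinite_eval_ne_zero_s5 ψ.denom_ne_zero] with x hφ hψ
  exact RatFunc.eval_mul _ _ hφ hψ

theorem eventually_cofinite_ratFunc_eval_neg (φ : RatFunc K) :
    ∀ᶠ x in cofinite, (-φ).eval (RingHom.id K) x = -φ.eval (RingHom.id K) x := by
  filter_upwards [eventually_cofinite_ratFunc_eval_add φ (-φ)] with x hx
  rw [add_neg_cancel, RatFunc.eval_zero] at hx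
  exact eq_neg_of_add_eq_zero_right hx.symm

theorem eventually_cofinite_ratFunc_eval_inv (φ : RatFunc K) :
    ∀ᶠ x in cofinite, φ⁻¹.eval (RingHom.id K) x = (φ.eval (RingHom.id K) x)⁻¹ := by
  rcases eq_or_ne φ 0 with rfl | hφ
  · simp
  filter_upwards [eventually_cofinite_ratFunc_eval_mul φ φ⁻¹] with x hx
  rw [mul_inv_cancel₀ hφ, RatFunc.eval_one] at hx
  exact eq_inv_of_mul_eq_one_right hx.symm

end RatFunc

section ValuationRing

variable {v : AddValuation K (WithTop ℝ)} {s : ℕ → K}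

theorem map_div_nonneg_iff {b : K} (hb : b ≠ 0) (a : K) : 0 ≤ v (a / b) ↔ v b ≤ v a := by
  have hmul : v a = v (a / b) + v b := by rw [← v.map_mul, div_mul_cancel₀ a hb]
  rw [hmul, ← WithTop.add_le_add_iff_right (v.ne_top_iff.2 hb), zero_add]

theorem add_mem_VESet (hs : Tendsto s atTop cofinite) {φ ψ : RatFunc K} (hφ : φ ∈ VESet v s)
    (hψ : ψ ∈ VESet v s) : φ + ψ ∈ VESet v s := by
  filter_upwards [hφ, hψ, hs.eventually (eventually_cofinite_ratFunc_eval_add φ ψ)]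
    with n hφn hψn hn
  exact hn ▸ v.map_le_add hφn hψn

theorem mul_mem_VESet (hs : Tendsto s atTop cofinite) {φ ψ : RatFunc K} (hφ : φ ∈ VESet v s)
    (hψ : ψ ∈ VESet v s) : φ * ψ ∈ VESet v s := by
  filter_upwards [hφ, hψ, hs.eventually (eventually_cofinite_ratFunc_eval_mul φ ψ)]
    with n hφn hψn hn
  rw [hn, v.map_mul]
  exact add_nonneg hφn hψn

theorem neg_mem_VESet (hs : Tendsto s atTop cofinite) {φ : RatFunc K} (hφ : φ ∈ VESet v s) :
    -φ ∈ VESet v s := by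
  filter_upwards [hφ, hs.eventually (eventually_cofinite_ratFunc_eval_neg φ)] with n hφn hn
  rwa [hn, v.map_neg]

namespace IsPC

-- `v.toValuation` takes values in the order dual of `WithTop ℝ`, so inequalities are reversed.
theorem isPseudoConvergent (hs : IsPC v s) : IsPseudoConvergent v.toValuation s := hs

theorem tendsto_cofinite (hs : IsPC v s) : Tendsto s atTop cofinite :=
  Nat.cofinite_eq_atTop ▸ hs.isPseudoConvergent.injective.tendsto_cofinite

theorem mem_VESet_or_inv_mem (hs : IsPC v s) (φ : RatFunc K) :
    φ ∈ VESet v s ∨ φ⁻¹ ∈ VESet v s := by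
  rcases eq_or_ne φ 0 with rfl | hφ
  · exact .inl (.of_forall fun n => by simp)
  refine (hs.isPseudoConvergent.eventually_map_eval_le_or_ge φ.num φ.denom).imp
    (fun hle => ?_) fun hle => ?_
  · filter_upwards [hle, hs.tendsto_cofinite.eventually
      (eventually_cofinite_eval_ne_zero_s5 φ.denom_ne_zero)] with n hn hdenom
    rw [← eval₂_id, ← eval₂_id] at hn
    exact (map_div_nonneg_iff hdenom _).2 hn
  · filter_upwards [hle, hs.tendsto_cofinite.eventually
      (eventually_cofinite_eval_ne_zero_s5 (RatFunc.num_ne_zero hφ)),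
      hs.tendsto_cofinite.eventually (eventually_cofinite_ratFunc_eval_inv φ)] with n hn hnum hinv
    rw [← eval₂_id, ← eval₂_id] at hn
    rw [hinv, RatFunc.eval, inv_div]
    exact (map_div_nonneg_iff hnum _).2 hn

/-- The ring `V_E` of a pseudo-convergent sequence `E = {s_n}`, bundled as a valuation subring of
`K(X)`. -/
def valuationSubring (hs : IsPC v s) : ValuationSubring (RatFunc K) where
  carrier := VESet v s
  zero_mem' := .of_forall fun n => by simp
  one_mem' := .of_forall fun n => by simp
  add_mem' := add_mem_VESet hs.tendsto_cofinite
  mul_mem' := mul_mem_VESet hs.tendsto_cofinite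
  neg_mem' := neg_mem_VESet hs.tendsto_cofinite
  mem_or_inv_mem' := hs.mem_VESet_or_inv_mem

theorem eventually_map_ratFunc_eval_eq (hs : IsPC v s) (φ : RatFunc K) :
    ∀ᶠ n in atTop, ∀ x, v (s (n + 1) - s n) < v (x - s n) →
      v (φ.eval (RingHom.id K) x) = v (φ.eval (RingHom.id K) (s n)) := by
  filter_upwards [hs.isPseudoConvergent.eventually_map_eval_eq φ.num,
    hs.isPseudoConvergent.eventually_map_eval_eq φ.denom] with n hnum hdenom x hx
  have hnum' : v (φ.num.eval x) = v (φ.num.eval (s n)) := hnum x hx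
  have hdenom' : v (φ.denom.eval x) = v (φ.denom.eval (s n)) := hdenom x hx
  simp only [RatFunc.eval, eval₂_id, AddValuation.map_div, hnum', hdenom']

end IsPC

end ValuationRing

section Breadth

theorem dense_of_strictMono_of_tendsto {G : Type*} [AddCommGroup G] [LinearOrder G]
    [IsOrderedAddMonoid G] [TopologicalSpace G] [OrderTopology G] [Archimedean G]
    {S : AddSubgroup G} {g : ℕ → G} (hg : StrictMono g) (hmem : ∀ n, g n ∈ S) {r : G}
    (hlim : Tendsto g atTop (𝓝 r)) : Dense (S : Set G) := by
  have hgap : Tendsto (fun n => g (n + 1) - g n) atTop (𝓝 0) := by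
    simpa using (hlim.comp (tendsto_add_atTop_nat 1)).sub hlim
  refine S.dense_of_not_isolated_zero fun ε hε => ?_
  obtain ⟨n, hn⟩ := (hgap.eventually_lt_const hε).exists
  exact ⟨_, S.sub_mem (hmem (n + 1)) (hmem n), sub_pos.2 (hg n.lt_succ_self), hn⟩

variable {v : AddValuation K (WithTop ℝ)} {s t : ℕ → K} {δ : WithTop ℝ}

theorem isBreadth_iff_tendsto :
    IsBreadth v s δ ↔ Tendsto (fun n => v (s (n + 1) - s n)) atTop (𝓝 δ) :=
  tendsto_order.symm

/-- The value group `Γ_v` of `v`, as an additive subgroup of `ℝ`. -/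
def valueAddSubgroup (v : AddValuation K (WithTop ℝ)) : AddSubgroup ℝ where
  carrier := valueGroup v
  zero_mem' := ⟨1, v.map_one⟩
  add_mem' := by
    rintro _ _ ⟨x, hx⟩ ⟨y, hy⟩
    exact ⟨x * y, by rw [v.map_mul, hx, hy, WithTop.coe_add]⟩
  neg_mem' := by
    rintro _ ⟨x, hx⟩
    exact ⟨x⁻¹, by rw [v.map_inv, hx, WithTop.LinearOrderedAddCommGroup.coe_neg]⟩

theorem denseRange_of_dense_valueAddSubgroup (hv : Dense (valueAddSubgroup v : Set ℝ)) :
    DenseRange v := by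
  have hcoe : DenseRange ((↑) : ℝ → WithTop ℝ) := by
    rw [DenseRange, dense_iff_closure_eq, WithTop.range_coe, closure_Iio' ⟨0, WithTop.coe_lt_top 0⟩]
    exact Iic_top
  refine (hcoe.dense_image WithTop.continuous_coe hv).mono ?_
  rintro _ ⟨r, ⟨x, hx⟩, rfl⟩
  exact ⟨x, hx⟩

namespace IsPC

theorem strictMono_map_sub (hs : IsPC v s) : StrictMono fun n => v (s (n + 1) - s n) :=
  strictMono_nat_of_lt_succ hs

theorem map_sub_ne_top (hs : IsPC v s) (n : ℕ) : v (s (n + 1) - s n) ≠ ⊤ :=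
  (hs n).ne_top

theorem exists_isBreadth (hs : IsPC v s) : ∃ δ, IsBreadth v s δ :=
  ⟨_, isBreadth_iff_tendsto.2
    (tendsto_atTop_ciSup hs.strictMono_map_sub.monotone (OrderTop.bddAbove _))⟩

theorem map_sub_le_breadth (hs : IsPC v s) (hδ : IsBreadth v s δ) (n : ℕ) :
    v (s (n + 1) - s n) ≤ δ :=
  hs.strictMono_map_sub.monotone.ge_of_tendsto (isBreadth_iff_tendsto.1 hδ) n

theorem denseRange (hs : IsPC v s) (hδ : IsBreadth v s δ) (htop : δ ≠ ⊤) : DenseRange v := by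
  lift δ to ℝ using htop
  choose g hg using fun n => WithTop.ne_top_iff_exists.1 (hs.map_sub_ne_top n)
  have hmono : StrictMono g := fun n m hnm => by
    simpa only [← hg, WithTop.coe_lt_coe] using hs.strictMono_map_sub hnm
  have hlim : Tendsto g atTop (𝓝 δ) := WithTop.isEmbedding_coe.tendsto_nhds_iff.2
    ((isBreadth_iff_tendsto.1 hδ).congr fun n => (hg n).symm)
  have hmem : ∀ n, g n ∈ valueAddSubgroup v := fun n => ⟨_, (hg n).symm⟩
  exact denseRange_of_dense_valueAddSubgroup (dense_of_strictMono_of_tendsto hmono hmem hlim)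

end IsPC

theorem exists_isPC_isBreadth_of_denseRange (hv : DenseRange v) (a : K) {r : WithTop ℝ}
    (hr : r < δ) : ∃ t, IsPC v t ∧ IsBreadth v t δ ∧ ∀ n, r < v (t n - a) := by
  obtain ⟨u, hu, hmem, hlim⟩ := Dense.exists_seq_strictMono_tendsto_of_lt hv hr
  choose c hc using fun n => (hmem n).2
  have hgap : ∀ n, v ((a + c (n + 1)) - (a + c n)) = u n := fun n => by
    rw [add_sub_add_left_eq_sub, v.map_sub_eq_of_lt_right, hc]
    simpa only [hc] using hu n.lt_succ_self
  refine ⟨fun n => a + c n, fun n => ?_, ?_, fun n => ?_⟩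
  · simpa only [hgap] using hu n.lt_succ_self
  · simpa only [isBreadth_iff_tendsto, hgap] using hlim
  · rw [add_sub_cancel_left, hc]
    exact (hmem n).1.1

theorem le_breadth_of_eventually_le_map_sub (hδ : IsBreadth v t δ) {a : K} {γ : WithTop ℝ}
    (hγ : ∀ᶠ n in atTop, γ ≤ v (t n - a)) : γ ≤ δ := by
  refine ge_of_tendsto (isBreadth_iff_tendsto.1 hδ) ?_
  filter_upwards [hγ, (tendsto_add_atTop_nat 1).eventually hγ] with n hn hn'
  simpa only [sub_sub_sub_cancel_right] using v.map_le_sub hn' hn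

end Breadth

section Zariski

theorem mem_closure_zarTop_iff {L : Type*} [Field L] {S : Set (ValuationSubring L)}
    {W : ValuationSubring L} :
    W ∈ @closure _ (zarTop L) S ↔
      ∀ T : Finset L, (∀ φ ∈ T, φ ∈ W) → ∃ W' ∈ S, ∀ φ ∈ T, φ ∈ W' := by
  classical
  let _ := zarTop L
  have hbasis := isTopologicalBasis_of_subbasis (t := zarTop L) rfl
  rw [hbasis.mem_closure_iff]
  refine ⟨fun h T hT => ?_, ?_⟩
  · obtain ⟨W', hmem, hW'⟩ := h _ ⟨(fun φ => {A : ValuationSubring L | φ ∈ A}) '' T,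
      ⟨T.finite_toSet.image _, by rintro _ ⟨φ, -, rfl⟩; exact ⟨φ, rfl⟩⟩, rfl⟩
      (forall_mem_image.2 hT)
    exact ⟨W', hW', (forall_mem_image (p := (W' ∈ ·))).1 hmem⟩
  · rintro h _ ⟨F, ⟨hfin, hsub⟩, rfl⟩ hW
    choose! φ hφ using hsub
    obtain ⟨W', hW', hmem⟩ := h (hfin.toFinset.image φ) (by
      simp only [Finset.forall_mem_image, Finite.mem_toFinset]
      exact fun U hU => (hφ hU).subset (hW U hU))
    simp only [Finset.forall_mem_image, Finite.mem_toFinset] at hmem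
    exact ⟨W', fun U hU => (hφ hU).superset (hmem hU), hW'⟩

theorem VVδ_subset_VV (v : AddValuation K (WithTop ℝ)) (δ : WithTop ℝ) : VVδ v δ ⊆ VV v :=
  fun _ ⟨s, hs, _, hWs⟩ => ⟨s, hs, hWs⟩

variable {v : AddValuation K (WithTop ℝ)} {s : ℕ → K} {δ δ' : WithTop ℝ}

theorem algebraMap_C_inv_mul_X_sub_C_mem_VESet_iff {b : K} (hb : b ≠ 0) (a : K) :
    algebraMap K[X] (RatFunc K) (C b⁻¹ * (X - C a)) ∈ VESet v s ↔
      ∀ᶠ n in atTop, v b ≤ v (s n - a) := by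
  have heval : ∀ x, RatFunc.eval (RingHom.id K) x
      (algebraMap K[X] (RatFunc K) (C b⁻¹ * (X - C a))) = (x - a) / b := fun x => by
    rw [RatFunc.eval_algebraMap]
    simp [div_eq_inv_mul]
  simp only [VESet, mem_ofPred_eq, heval, map_div_nonneg_iff hb]

theorem breadth_le_of_mem_closure {W : ValuationSubring (RatFunc K)}
    (hW : W ∈ @closure _ (zarTop _) (VVδ v δ)) (hW' : W ∈ VVδ v δ') : δ' ≤ δ := by
  obtain ⟨s, hs, hδ', hWs⟩ := hW'
  refine le_of_tendsto' (isBreadth_iff_tendsto.1 hδ') fun n => ?_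
  have hne : s (n + 1) - s n ≠ 0 := v.ne_top_iff.1 (hs.map_sub_ne_top n)
  set φ := algebraMap K[X] (RatFunc K) (C (s (n + 1) - s n)⁻¹ * (X - C (s n)))
  have hφ : φ ∈ W := hWs.superset <| (algebraMap_C_inv_mul_X_sub_C_mem_VESet_iff hne (s n)).2 <|
    (eventually_gt_atTop n).mono fun m hm => (hs.isPseudoConvergent.map_sub_of_lt hm).le
  obtain ⟨W', ⟨t, -, hδ, hWt⟩, hφ'⟩ := mem_closure_zarTop_iff.1 hW {φ} (by simpa using hφ)
  exact le_breadth_of_eventually_le_map_sub hδ <|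
    (algebraMap_C_inv_mul_X_sub_C_mem_VESet_iff hne (s n)).1 <|
      hWt.subset (hφ' φ (Finset.mem_singleton_self φ))

theorem VVδ_subset_closure_of_lt (hlt : δ' < δ) : VVδ v δ' ⊆ @closure _ (zarTop _) (VVδ v δ) := by
  rintro W ⟨s, hs, hδ', hWs⟩
  refine mem_closure_zarTop_iff.2 fun T hT => ?_
  have hconst : ∀ᶠ n in atTop, ∀ φ ∈ T, 0 ≤ v (φ.eval (RingHom.id K) (s n)) ∧
      ∀ x, v (s (n + 1) - s n) < v (x - s n) →
        v (φ.eval (RingHom.id K) x) = v (φ.eval (RingHom.id K) (s n)) :=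
    (eventually_all_finset T).2 fun φ hφ =>
      (hWs.subset (hT φ hφ)).and (hs.eventually_map_ratFunc_eval_eq φ)
  obtain ⟨n, hn⟩ := hconst.exists
  obtain ⟨t, ht, hδ, hnear⟩ := exists_isPC_isBreadth_of_denseRange
    (hs.denseRange hδ' hlt.ne_top) (s n) ((hs.map_sub_le_breadth hδ' n).trans_lt hlt)
  refine ⟨ht.valuationSubring, ⟨t, ht, hδ, rfl⟩, fun φ hφ => .of_forall fun m => ?_⟩
  obtain ⟨hnonneg, heq⟩ := hn φ hφ
  exact hnonneg.trans_eq (heq (t m) (hnear m)).symm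

end Zariski

/-- The closure of `𝒱(•,δ)` in `𝒱` (Zariski topology) is
`⋃_{δ' ≤ δ} 𝒱(•,δ')`. -/
theorem statement5 (v : AddValuation K (WithTop ℝ)) (hv : IsRankOne v)
    (δ : WithTop ℝ) :
    @closure _ (zarSub (VV v))
        {W : ↥(VV v) | (W : ValuationSubring (RatFunc K)) ∈ VVδ v δ} =
      {W : ↥(VV v) | ∃ δ' : WithTop ℝ, δ' ≤ δ ∧
        (W : ValuationSubring (RatFunc K)) ∈ VVδ v δ'} := by
  have himage : Subtype.val '' {W : ↥(VV v) | (W : ValuationSubring (RatFunc K)) ∈ VVδ v δ} =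
      VVδ v δ :=
    (Subtype.image_preimage_coe _ _).trans (inter_eq_right.2 (VVδ_subset_VV v δ))
  ext W
  rw [zarSub, @closure_induced, himage]
  constructor
  · intro hW
    obtain ⟨s, hs, hWs⟩ := W.2
    obtain ⟨δ', hδ'⟩ := hs.exists_isBreadth
    have hWδ' : W.1 ∈ VVδ v δ' := ⟨s, hs, hδ', hWs⟩
    exact ⟨δ', breadth_le_of_mem_closure hW hWδ', hWδ'⟩
  · rintro ⟨δ', hle, hW⟩
    rcases hle.eq_or_lt with rfl | hlt
    · exact @subset_closure _ (zarTop _) _ _ hW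
    · exact VVδ_subset_closure_of_lt hlt hW

end PaperPCZar
end
end

section
/- Suppose V is not discrete, let β ∈ K̄ and let u be a fixed extension of v to K̄. Then the map Σ_β : 𝒱(β,•) → (−∞, δ(β,K)], V_E ↦ δ_E, is a homeomorphism between 𝒱(β,•) endowed with the (subspace) Zariski topology and the interval (−∞, δ(β,K)] endowed with the ℚΓ_v-upper limit topology. -/
open Filter Topology TopologicalSpace Set Polynomial

noncomputable section

namespace PaperPCZar

variable {K : Type*} [Field K]

/-!
Write `d y = u (β - y)` for `y ∈ K`. Splitting numerator and denominator over `K̄` shows that, when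
`d y` tends to `δ` from below, `v (φ y)` eventually has the form `a + k * d y` with `a ∈ ℚΓ_v` and
`k` an integer. Its zero `-a / k` lies in `ℚΓ_v`, so its sign is eventually constant; hence the ring
of those `φ` which are eventually integral depends on `δ` only, and it is `V_E` for every `E` with
pseudo-limit `β` and breadth `δ`.

If `δ ∉ ℚΓ_v`, the zero cannot be `δ` itself and integrality persists slightly beyond `δ`; otherwise
it may be lost there. This is why `{δ | φ ∈ V_δ}` is a union of intervals `(α, λ]` with
`λ ∈ ℚΓ_v ∪ {∞}`. Conversely, if `r = v t / m` and `r < d y`, the function `ψ = (X - y) ^ m / t`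
satisfies `ψ ∈ V_δ ↔ r < δ` and `ψ⁻¹ ∈ V_δ ↔ δ ≤ r`, so such intervals are Zariski open.
-/

section ValueGroup

/-- The value group `Γ_v`, as a subgroup of `ℝ`. -/
def valueSubgroup (v : AddValuation K (WithTop ℝ)) : AddSubgroup ℝ where
  carrier := valueGroup v
  zero_mem' := ⟨1, by simp⟩
  add_mem' := by
    rintro a b ⟨x, hx⟩ ⟨y, hy⟩
    exact ⟨x * y, by rw [AddValuation.map_mul, hx, hy, WithTop.coe_add]⟩
  neg_mem' := by
    rintro a ⟨x, hx⟩
    exact ⟨x⁻¹, by rw [AddValuation.map_inv, hx, WithTop.LinearOrderedAddCommGroup.coe_neg]⟩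

theorem mem_QGamma_iff {v : AddValuation K (WithTop ℝ)} {r : ℝ} :
    r ∈ QGamma v ↔ ∃ m : ℕ, m ≠ 0 ∧ m * r ∈ valueGroup v := by
  constructor
  · rintro ⟨q, γ, hγ, rfl⟩
    have hmul : (q.den : ℝ) * (q * γ) = q.num • γ := by
      rw [← mul_assoc, zsmul_eq_mul]
      exact_mod_cast congrArg (· * γ) (congrArg (Rat.cast (K := ℝ)) (Rat.den_mul_eq_num q))
    exact ⟨q.den, q.den_ne_zero, hmul ▸ (valueSubgroup v).zsmul_mem hγ q.num⟩
  · rintro ⟨m, hm, h⟩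
    refine ⟨(m : ℚ)⁻¹, m * r, h, ?_⟩
    push_cast
    field_simp

/-- The divisible hull `ℚΓ_v`, as a `ℚ`-subspace of `ℝ`. -/
def divisibleHull (v : AddValuation K (WithTop ℝ)) : Submodule ℚ ℝ where
  carrier := QGamma v
  zero_mem' := ⟨0, 0, (valueSubgroup v).zero_mem, by simp⟩
  add_mem' := by
    intro a b ha hb
    obtain ⟨m, hm, ha⟩ := mem_QGamma_iff.1 ha
    obtain ⟨n, hn, hb⟩ := mem_QGamma_iff.1 hb
    refine mem_QGamma_iff.2 ⟨m * n, mul_ne_zero hm hn, ?_⟩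
    have hsum : ((m * n : ℕ) : ℝ) * (a + b) = n • (m * a) + m • (n * b) := by
      simp only [nsmul_eq_mul]
      push_cast
      ring
    exact hsum ▸ (valueSubgroup v).add_mem ((valueSubgroup v).nsmul_mem ha n)
      ((valueSubgroup v).nsmul_mem hb m)
  smul_mem' := by
    rintro q _ ⟨q', γ, hγ, rfl⟩
    exact ⟨q * q', γ, hγ, by rw [Rat.smul_def]; push_cast; ring⟩

theorem valueGroup_subset_QGamma (v : AddValuation K (WithTop ℝ)) : valueGroup v ⊆ QGamma v :=
  fun γ hγ => ⟨1, γ, hγ, by simp⟩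

theorem exists_mem_between_coe {Λ : Set ℝ} (hΛ : Dense Λ) {a c : WithTop ℝ} (hac : a < c) :
    ∃ g ∈ Λ, a < (g : WithTop ℝ) ∧ (g : WithTop ℝ) < c := by
  lift a to ℝ using ne_top_of_lt hac
  cases c with
  | top =>
    obtain ⟨g, hg, hag⟩ := hΛ.exists_gt a
    exact ⟨g, hg, WithTop.coe_lt_coe.2 hag, WithTop.coe_lt_top g⟩
  | coe c =>
    obtain ⟨g, hg, hag, hgc⟩ := hΛ.exists_between (WithTop.coe_lt_coe.1 hac)
    exact ⟨g, hg, WithTop.coe_lt_coe.2 hag, WithTop.coe_lt_coe.2 hgc⟩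

theorem map_pow_div_eq {v : AddValuation K (WithTop ℝ)} {x t : K} {m : ℕ} {a r : ℝ}
    (hx : v x = a) (ht : v t = ↑(m * r)) : v (x ^ m / t) = ((m * (a - r) : ℝ) : WithTop ℝ) := by
  rw [v.map_div, v.map_pow, hx, ht, ← WithTop.coe_nsmul,
    ← WithTop.LinearOrderedAddCommGroup.coe_sub, nsmul_eq_mul, mul_sub]

theorem map_pow_div_pos {v : AddValuation K (WithTop ℝ)} {x t : K} {m : ℕ} {r : ℝ}
    (hm : m ≠ 0) (ht : v t = ↑(m * r)) (hx : r < v x) : 0 < v (x ^ m / t) := by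
  have hm' : (0 : ℝ) < m := by positivity
  cases hvx : v x with
  | top =>
    obtain rfl := v.top_iff.1 hvx
    simp [hm]
  | coe a =>
    rw [map_pow_div_eq hvx ht]
    rw [hvx, WithTop.coe_lt_coe] at hx
    exact WithTop.coe_pos.2 (mul_pos hm' (sub_pos.2 hx))

theorem map_pow_div_neg {v : AddValuation K (WithTop ℝ)} {x t : K} {m : ℕ} {r : ℝ}
    (hm : m ≠ 0) (ht : v t = ↑(m * r)) (hx : v x < r) : v (x ^ m / t) < 0 := by
  have hm' : (0 : ℝ) < m := by positivity
  obtain ⟨a, ha⟩ := WithTop.ne_top_iff_exists.1 (ne_top_of_lt hx)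
  rw [map_pow_div_eq ha.symm ht]
  rw [← ha, WithTop.coe_lt_coe] at hx
  exact_mod_cast mul_neg_of_pos_of_neg hm' (sub_neg.2 hx)

theorem exists_ne_map_eq_of_sum_eq_zero {R Γ₀ ι : Type*} [Ring R]
    [LinearOrderedAddCommMonoidWithTop Γ₀] (w : AddValuation R Γ₀) {s : Finset ι} {f : ι → R}
    (hs : s.Nonempty) (hf : ∀ i ∈ s, w (f i) ≠ ⊤) (hsum : ∑ i ∈ s, f i = 0) :
    ∃ i ∈ s, ∃ j ∈ s, i ≠ j ∧ w (f i) = w (f j) := by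
  classical
  by_contra! hdistinct
  obtain ⟨j, hj, hmin⟩ := s.exists_min_image (fun i => w (f i)) hs
  have hlt : w (f j) < w (∑ i ∈ s.erase j, f i) := by
    refine AddValuation.map_lt_sum w (hf j hj) fun i hi => ?_
    obtain ⟨hij, hi⟩ := Finset.mem_erase.1 hi
    exact (hmin i hi).lt_of_ne (hdistinct j hj i hi hij.symm)
  have heq := AddValuation.map_add_eq_of_lt_left w hlt
  rw [Finset.add_sum_erase _ _ hj, hsum, AddValuation.map_zero] at heq
  exact hf j hj heq.symm

variable {L : Type*} [Field L] [Algebra K L]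
  {v : AddValuation K (WithTop ℝ)} {u : AddValuation L (WithTop ℝ)}

theorem mem_QGamma_of_isAlgebraic (hu : ∀ x : K, u (algebraMap K L x) = v x) {α : L}
    (hα : IsAlgebraic K α) {r : ℝ} (hr : u α = r) : r ∈ QGamma v := by
  obtain ⟨p, hp0, hp⟩ := hα
  have hterm : ∀ i ∈ p.support, ∃ g ∈ valueGroup v,
      u (p.coeff i • α ^ i) = ((g + i * r : ℝ) : WithTop ℝ) := by
    intro i hi
    obtain ⟨g, hg⟩ := WithTop.ne_top_iff_exists.1 (v.ne_top_iff.2 (mem_support_iff.1 hi))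
    refine ⟨g, ⟨_, hg.symm⟩, ?_⟩
    rw [Algebra.smul_def, u.map_mul, u.map_pow, hu, ← hg, hr, ← WithTop.coe_nsmul,
      ← WithTop.coe_add, nsmul_eq_mul]
  have hsum : ∑ i ∈ p.support, p.coeff i • α ^ i = 0 := by
    simp only [Algebra.smul_def]
    rw [← hp, aeval_def, eval₂_eq_sum, sum_def]
  have hfinite : ∀ i ∈ p.support, u (p.coeff i • α ^ i) ≠ ⊤ := fun i hi => by
    obtain ⟨g, -, hg⟩ := hterm i hi
    exact hg ▸ WithTop.coe_ne_top
  obtain ⟨i, hi, j, hj, hij, heq⟩ :=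
    exists_ne_map_eq_of_sum_eq_zero u (support_nonempty.2 hp0) hfinite hsum
  obtain ⟨g, hg, hgi⟩ := hterm i hi
  obtain ⟨g', hg', hgj⟩ := hterm j hj
  have hreal : g + i * r = g' + j * r := WithTop.coe_injective (hgi ▸ hgj ▸ heq)
  have hne : (j : ℝ) - i ≠ 0 := sub_ne_zero.2 (by exact_mod_cast hij.symm)
  refine ⟨((j : ℚ) - i)⁻¹, g - g', (valueSubgroup v).sub_mem hg hg', ?_⟩
  push_cast
  rw [eq_inv_mul_iff_mul_eq₀ hne]
  linarith

end ValueGroup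

section AffineGerms

variable {ι : Type*} {w f g : ι → WithTop ℝ} {F : Filter ι}

/-- Along `F`, the function `w` is eventually finite and eventually strictly on one side of each
element of `Γ`. It isolates what is needed for the sign of `a + k • w` to stabilise along `F`. -/
structure EventuallyAvoids (w : ι → WithTop ℝ) (F : Filter ι) (Γ : Set ℝ) : Prop where
  ne_top : ∀ᶠ y in F, w y ≠ ⊤
  lt_or_gt : ∀ c ∈ Γ, (∀ᶠ y in F, w y < c) ∨ ∀ᶠ y in F, (c : WithTop ℝ) < w y

theorem eventuallyAvoids_comap_nhdsLT (w : ι → WithTop ℝ) (δ : WithTop ℝ) (Γ : Set ℝ) :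
    EventuallyAvoids w (comap w (𝓝[<] δ)) Γ where
  ne_top := by
    have h : ∀ᶠ x in 𝓝[<] δ, x ≠ ⊤ := eventually_mem_nhdsWithin.mono fun x hx => ne_top_of_lt hx
    exact h.comap w
  lt_or_gt c _ := by
    rcases lt_or_ge (c : WithTop ℝ) δ with hc | hc
    · have h : ∀ᶠ x in 𝓝[<] δ, (c : WithTop ℝ) < x := nhdsWithin_le_nhds (eventually_gt_nhds hc)
      exact .inr (h.comap w)
    · have h : ∀ᶠ x in 𝓝[<] δ, x < (c : WithTop ℝ) :=
        eventually_mem_nhdsWithin.mono fun x hx => lt_of_lt_of_le hx hc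
      exact .inl (h.comap w)

theorem eventuallyAvoids_comap_nhds (w : ι → WithTop ℝ) {d : ℝ} {Γ : Set ℝ} (hd : d ∉ Γ) :
    EventuallyAvoids w (comap w (𝓝 (d : WithTop ℝ))) Γ where
  ne_top := (eventually_ne_nhds WithTop.coe_ne_top).comap w
  lt_or_gt c hc := by
    rcases lt_or_gt_of_ne (ne_of_mem_of_not_mem hc hd) with h | h
    · exact .inr ((eventually_gt_nhds (WithTop.coe_lt_coe.2 h)).comap w)
    · exact .inl ((eventually_lt_nhds (WithTop.coe_lt_coe.2 h)).comap w)

/-- Along `F`, the function `f` is eventually of the form `a + k • w` with intercept `a ∈ Γ` and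
rational slope `k`. Both `f` and `w` are required to be eventually finite. -/
def IsAffineAlong (w : ι → WithTop ℝ) (F : Filter ι) (Γ : Submodule ℚ ℝ) (f : ι → WithTop ℝ) :
    Prop :=
  ∃ a ∈ Γ, ∃ k : ℚ, ∀ᶠ y in F, ∃ x : ℝ, w y = x ∧ f y = ((a + k * x : ℝ) : WithTop ℝ)

variable {Γ : Submodule ℚ ℝ}

theorem isAffineAlong_const (hF : ∀ᶠ y in F, w y ≠ ⊤) {a : ℝ} (ha : a ∈ Γ)
    (hf : ∀ᶠ y in F, f y = a) : IsAffineAlong w F Γ f := by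
  refine ⟨a, ha, 0, ?_⟩
  filter_upwards [hF, hf] with y hy hfy
  obtain ⟨x, hx⟩ := WithTop.ne_top_iff_exists.1 hy
  exact ⟨x, hx.symm, by simpa using hfy⟩

theorem isAffineAlong_of_eventuallyEq (hF : ∀ᶠ y in F, w y ≠ ⊤) (hf : ∀ᶠ y in F, f y = w y) :
    IsAffineAlong w F Γ f := by
  refine ⟨0, Γ.zero_mem, 1, ?_⟩
  filter_upwards [hF, hf] with y hy hfy
  obtain ⟨x, hx⟩ := WithTop.ne_top_iff_exists.1 hy
  exact ⟨x, hx.symm, by simp [hfy, hx]⟩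

theorem IsAffineAlong.add (hf : IsAffineAlong w F Γ f) (hg : IsAffineAlong w F Γ g) :
    IsAffineAlong w F Γ (fun y => f y + g y) := by
  obtain ⟨a, ha, k, hf⟩ := hf
  obtain ⟨b, hb, l, hg⟩ := hg
  refine ⟨a + b, Γ.add_mem ha hb, k + l, ?_⟩
  filter_upwards [hf, hg] with y ⟨x, hx, hfx⟩ ⟨x', hx', hgx⟩
  obtain rfl : x = x' := WithTop.coe_injective (hx.symm.trans hx')
  refine ⟨x, hx, ?_⟩
  simp only [hfx, hgx, ← WithTop.coe_add]
  congr 1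
  push_cast
  ring

theorem IsAffineAlong.neg (hf : IsAffineAlong w F Γ f) :
    IsAffineAlong w F Γ (fun y => -f y) := by
  obtain ⟨a, ha, k, hf⟩ := hf
  refine ⟨-a, Γ.neg_mem ha, -k, hf.mono ?_⟩
  rintro y ⟨x, hx, hfx⟩
  refine ⟨x, hx, ?_⟩
  simp only [hfx, ← WithTop.LinearOrderedAddCommGroup.coe_neg]
  congr 1
  push_cast
  ring

theorem IsAffineAlong.eventually_nonneg_or_neg (hf : IsAffineAlong w F Γ f)
    (hF : EventuallyAvoids w F Γ) : (∀ᶠ y in F, 0 ≤ f y) ∨ ∀ᶠ y in F, f y < 0 := by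
  obtain ⟨a, ha, k, hf⟩ := hf
  suffices h : (∀ᶠ y in F, ∀ x : ℝ, w y = x → 0 ≤ a + k * x) ∨
      ∀ᶠ y in F, ∀ x : ℝ, w y = x → a + k * x < 0 by
    refine h.imp (fun h => ?_) (fun h => ?_) <;>
    · filter_upwards [h, hf] with y hsign ⟨x, hx, hfx⟩
      rw [hfx]
      exact_mod_cast hsign x hx
  rcases eq_or_ne k 0 with rfl | hk
  · rcases le_or_gt 0 a with h | h
    · exact .inl (.of_forall fun y x _ => by simpa using h)
    · exact .inr (.of_forall fun y x _ => by simpa using h)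
  have hroot : -k⁻¹ • a ∈ Γ := Γ.smul_mem _ ha
  have hfactor (x : ℝ) : a + k * x = k * (x - -k⁻¹ • a) := by
    have : (k : ℝ) ≠ 0 := by exact_mod_cast hk
    rw [Rat.smul_def]
    push_cast
    field_simp
    ring
  simp only [hfactor]
  have hside : (∀ᶠ y in F, ∀ x : ℝ, w y = x → x - -k⁻¹ • a < 0) ∨
      ∀ᶠ y in F, ∀ x : ℝ, w y = x → 0 < x - -k⁻¹ • a :=
    (hF.lt_or_gt _ hroot).imp
      (fun h => h.mono fun y hy x hx => sub_neg.2 (WithTop.coe_lt_coe.1 (hx ▸ hy)))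
      (fun h => h.mono fun y hy x hx => sub_pos.2 (WithTop.coe_lt_coe.1 (hx ▸ hy)))
  rcases lt_or_gt_of_ne ((Rat.cast_ne_zero (α := ℝ)).2 hk) with hk | hk <;> rcases hside with h | h
  · exact .inl (h.mono fun y hy x hx => (mul_pos_of_neg_of_neg hk (hy x hx)).le)
  · exact .inr (h.mono fun y hy x hx => mul_neg_of_neg_of_pos hk (hy x hx))
  · exact .inr (h.mono fun y hy x hx => mul_neg_of_pos_of_neg hk (hy x hx))
  · exact .inl (h.mono fun y hy x hx => (mul_pos hk (hy x hx)).le)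

end AffineGerms

section IntegersAlong

variable {v : AddValuation K (WithTop ℝ)} {F G : Filter K}

/-- The rational functions whose values at `y` are `v`-integral for `y` eventually along `F`. This
is `V_E` when `F` is the image of `atTop` under the sequence `E`. -/
def integersAlong (v : AddValuation K (WithTop ℝ)) (F : Filter K) : Set (RatFunc K) :=
  {φ | ∀ᶠ y in F, 0 ≤ v (φ.eval (RingHom.id K) y)}

/-- Every rational function is eventually integral or eventually non-integral along `F`. -/
def DecidesSign (v : AddValuation K (WithTop ℝ)) (F : Filter K) : Prop :=
  ∀ φ : RatFunc K, (∀ᶠ y in F, 0 ≤ v (φ.eval (RingHom.id K) y)) ∨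
    ∀ᶠ y in F, v (φ.eval (RingHom.id K) y) < 0

theorem eventually_denom_ne_zero (hF : F ≤ cofinite) (φ : RatFunc K) :
    ∀ᶠ y in F, φ.denom.eval₂ (RingHom.id K) y ≠ 0 := by
  have hfin := φ.denom.finite_setOfPred_isRoot φ.denom_ne_zero
  exact hF hfin.compl_mem_cofinite

theorem eventually_eval_add (hF : F ≤ cofinite) (φ ψ : RatFunc K) :
    ∀ᶠ y in F, (φ + ψ).eval (RingHom.id K) y =
      φ.eval (RingHom.id K) y + ψ.eval (RingHom.id K) y := by
  filter_upwards [eventually_denom_ne_zero hF φ, eventually_denom_ne_zero hF ψ] with y hφ hψ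
  exact RatFunc.eval_add _ _ hφ hψ

theorem eventually_eval_neg (hF : F ≤ cofinite) (φ : RatFunc K) :
    ∀ᶠ y in F, (-φ).eval (RingHom.id K) y = -φ.eval (RingHom.id K) y := by
  filter_upwards [eventually_eval_add hF φ (-φ)] with y hy
  rw [add_neg_cancel, RatFunc.eval_zero] at hy
  exact eq_neg_of_add_eq_zero_right hy.symm

theorem eventually_eval_mul (hF : F ≤ cofinite) (φ ψ : RatFunc K) :
    ∀ᶠ y in F, (φ * ψ).eval (RingHom.id K) y =
      φ.eval (RingHom.id K) y * ψ.eval (RingHom.id K) y := by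
  filter_upwards [eventually_denom_ne_zero hF φ, eventually_denom_ne_zero hF ψ] with y hφ hψ
  exact RatFunc.eval_mul _ _ hφ hψ

theorem eventually_eval_inv (hF : F ≤ cofinite) (φ : RatFunc K) :
    ∀ᶠ y in F, φ⁻¹.eval (RingHom.id K) y = (φ.eval (RingHom.id K) y)⁻¹ := by
  rcases eq_or_ne φ 0 with rfl | hφ
  · simp
  filter_upwards [eventually_eval_mul hF φ φ⁻¹] with y hy
  rw [mul_inv_cancel₀ hφ, RatFunc.eval_one] at hy
  exact eq_inv_of_mul_eq_one_right hy.symm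

theorem notMem_integersAlong_of_eventually_neg [F.NeBot] {φ : RatFunc K}
    (h : ∀ᶠ y in F, v (φ.eval (RingHom.id K) y) < 0) : φ ∉ integersAlong v F := by
  intro hφ
  obtain ⟨y, hneg, hnonneg⟩ := (h.and hφ).exists
  exact hneg.not_ge hnonneg

theorem inv_mem_integersAlong_of_eventually_neg (hF : F ≤ cofinite) {φ : RatFunc K}
    (h : ∀ᶠ y in F, v (φ.eval (RingHom.id K) y) < 0) : φ⁻¹ ∈ integersAlong v F := by
  filter_upwards [h, eventually_eval_inv hF φ] with y hneg hinv
  rw [hinv, v.map_inv]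
  exact (LinearOrderedAddCommGroupWithTop.neg_pos.2 (.inl hneg)).le

theorem inv_notMem_integersAlong_of_eventually_pos [F.NeBot] (hF : F ≤ cofinite) {φ : RatFunc K}
    (hφ : φ ≠ 0) (h : ∀ᶠ y in F, 0 < v (φ.eval (RingHom.id K) y)) : φ⁻¹ ∉ integersAlong v F := by
  intro hinv
  obtain ⟨y, hpos, hnonneg, hmul⟩ := (h.and (hinv.and (eventually_eval_mul hF φ φ⁻¹))).exists
  have hsum := congrArg v hmul
  rw [mul_inv_cancel₀ hφ, RatFunc.eval_one, v.map_one, v.map_mul] at hsum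
  exact (hpos.trans_le (le_add_of_nonneg_right hnonneg)).ne hsum

/-- The ring `integersAlong v F` as a valuation subring of `K(X)`. -/
def valuationSubringAlong (v : AddValuation K (WithTop ℝ)) (F : Filter K) (hF : F ≤ cofinite)
    (hsign : DecidesSign v F) : ValuationSubring (RatFunc K) where
  carrier := integersAlong v F
  mul_mem' := by
    intro φ ψ hφ hψ
    filter_upwards [hφ, hψ, eventually_eval_mul hF φ ψ] with y hφ hψ hmul
    rw [hmul, v.map_mul]
    exact add_nonneg hφ hψ
  one_mem' := .of_forall fun y => by simp
  add_mem' := by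
    intro φ ψ hφ hψ
    filter_upwards [hφ, hψ, eventually_eval_add hF φ ψ] with y hφ hψ hadd
    rw [hadd]
    exact v.map_le_add hφ hψ
  zero_mem' := .of_forall fun y => by simp
  neg_mem' := by
    intro φ hφ
    filter_upwards [hφ, eventually_eval_neg hF φ] with y hφ hneg
    rwa [hneg, v.map_neg]
  mem_or_inv_mem' φ := (hsign φ).imp_right (inv_mem_integersAlong_of_eventually_neg hF)

theorem integersAlong_eq_of_le [G.NeBot] (hsign : DecidesSign v F) (hGF : G ≤ F) :
    integersAlong v G = integersAlong v F := by
  refine Subset.antisymm (fun φ hφ => (hsign φ).resolve_right fun hneg => ?_)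
    fun φ hφ => hGF hφ
  exact notMem_integersAlong_of_eventually_neg (hGF hneg) hφ

end IntegersAlong

section ValDist

variable {L : Type*} [Field L] [Algebra K L]
  {v : AddValuation K (WithTop ℝ)} {u : AddValuation L (WithTop ℝ)} {β : L} {F : Filter K}

/-- The `u`-adic closeness of `y ∈ K` to `β`: the larger it is, the closer `y` is to `β`. -/
def valDist (u : AddValuation L (WithTop ℝ)) (β : L) (y : K) : WithTop ℝ :=
  u (β - algebraMap K L y)

theorem map_sub_eq_of_valDist_lt (hu : ∀ x : K, u (algebraMap K L x) = v x) {y z : K}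
    (h : valDist u β y < valDist u β z) : v (z - y) = valDist u β y := by
  rw [← hu, map_sub, ← sub_sub_sub_cancel_left _ _ β]
  exact u.map_sub_eq_of_lt_left h

theorem map_sub_eq_of_valDist_gt (hu : ∀ x : K, u (algebraMap K L x) = v x) {y z : K}
    (h : valDist u β z < valDist u β y) : v (z - y) = valDist u β z := by
  rw [v.map_sub_swap, map_sub_eq_of_valDist_lt hu h]

theorem lt_map_sub (hu : ∀ x : K, u (algebraMap K L x) = v x) {y z : K} {c : WithTop ℝ}
    (hz : c < valDist u β z) (hy : c < valDist u β y) : c < v (z - y) := by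
  rw [← hu, map_sub, ← sub_sub_sub_cancel_left _ _ β, sub_eq_add_neg]
  exact u.map_lt_add hy (by rwa [u.map_neg])

theorem exists_valDist_eq (hu : ∀ x : K, u (algebraMap K L x) = v x) {b : WithTop ℝ}
    (hb : IsLUB (range (valDist (K := K) u β)) b) {g : ℝ} (hg : g ∈ valueGroup v) (hgb : g < b) :
    ∃ y : K, valDist u β y = g := by
  obtain ⟨_, ⟨z, rfl⟩, hz, -⟩ := hb.exists_between hgb
  obtain ⟨x, hx⟩ := hg
  refine ⟨z + x, ?_⟩
  rw [valDist, map_add, ← sub_sub, ← hx, ← hu]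
  exact u.map_sub_eq_of_lt_right (by rwa [hu, hx])

theorem isAffineAlong_map_sub_algebraMap [Algebra.IsAlgebraic K L]
    (hu : ∀ x : K, u (algebraMap K L x) = v x)
    (hF : EventuallyAvoids (valDist u β) F (QGamma v)) (α : L) :
    IsAffineAlong (valDist u β) F (divisibleHull v) (fun y => u (algebraMap K L y - α)) := by
  have hswap (y : K) : algebraMap K L y - α = (β - α) - (β - algebraMap K L y) := by ring
  by_cases hc : u (β - α) = ⊤
  · refine isAffineAlong_of_eventuallyEq hF.ne_top (hF.ne_top.mono fun y hy => ?_)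
    rw [hswap]
    exact u.map_sub_eq_of_lt_right (hc ▸ lt_top_iff_ne_top.2 hy)
  obtain ⟨c, hc⟩ := WithTop.ne_top_iff_exists.1 hc
  have hcΓ : c ∈ QGamma v :=
    mem_QGamma_of_isAlgebraic hu (Algebra.IsAlgebraic.isAlgebraic _) hc.symm
  rcases hF.lt_or_gt c hcΓ with h | h
  · refine isAffineAlong_of_eventuallyEq hF.ne_top (h.mono fun y hy => ?_)
    rw [hswap]
    exact u.map_sub_eq_of_lt_right (hc ▸ hy)
  · refine isAffineAlong_const hF.ne_top hcΓ (h.mono fun y hy => ?_)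
    rw [hswap, hc]
    exact u.map_sub_eq_of_lt_left (hc ▸ hy)

theorem isAffineAlong_map_eval [Algebra.IsAlgebraic K L] [IsAlgClosed L]
    (hu : ∀ x : K, u (algebraMap K L x) = v x)
    (hF : EventuallyAvoids (valDist u β) F (QGamma v)) {p : K[X]} (hp : p ≠ 0) :
    IsAffineAlong (valDist u β) F (divisibleHull v) (fun y => v (p.eval y)) := by
  have hroots (s : Multiset L) : IsAffineAlong (valDist u β) F (divisibleHull v)
      (fun y => u (s.map (algebraMap K L y - ·)).prod) := by
    induction s using Multiset.induction with
    | empty => exact isAffineAlong_const hF.ne_top (zero_mem _) (.of_forall fun y => by simp)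
    | cons α s ih =>
      simpa only [Multiset.map_cons, Multiset.prod_cons, u.map_mul] using
        (isAffineAlong_map_sub_algebraMap hu hF α).add ih
  obtain ⟨c, hc⟩ := WithTop.ne_top_iff_exists.1 (v.ne_top_iff.2 (leadingCoeff_ne_zero.2 hp))
  have hlead : IsAffineAlong (valDist u β) F (divisibleHull v) (fun _ => v p.leadingCoeff) :=
    isAffineAlong_const hF.ne_top (valueGroup_subset_QGamma v ⟨_, hc.symm⟩)
      (.of_forall fun _ => hc.symm)
  convert hlead.add (hroots (p.aroots L)) using 2 with y
  rw [← hu, ← aeval_algebraMap_apply_eq_algebraMap_eval,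
    (IsAlgClosed.splits _).aeval_eq_prod_aroots, u.map_mul, hu]

theorem decidesSign_of_eventuallyAvoids [Algebra.IsAlgebraic K L] [IsAlgClosed L]
    (hu : ∀ x : K, u (algebraMap K L x) = v x)
    (hF : EventuallyAvoids (valDist u β) F (QGamma v)) : DecidesSign v F := by
  intro φ
  rcases eq_or_ne φ 0 with rfl | hφ
  · exact .inl (.of_forall fun y => by simp)
  have hquot := (isAffineAlong_map_eval hu hF (RatFunc.num_ne_zero hφ)).add
    (isAffineAlong_map_eval hu hF φ.denom_ne_zero).neg
  simpa only [RatFunc.eval, eval₂_id, v.map_div, sub_eq_add_neg] using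
    hquot.eventually_nonneg_or_neg hF

end ValDist

section Approach

variable {L : Type*} [Field L] [Algebra K L]
  {v : AddValuation K (WithTop ℝ)} {u : AddValuation L (WithTop ℝ)} {β : L} {b δ : WithTop ℝ}

/-- The filter of those `y ∈ K` for which `u (β - y)` tends to `δ` from below. -/
def approach (u : AddValuation L (WithTop ℝ)) (β : L) (δ : WithTop ℝ) : Filter K :=
  comap (valDist u β) (𝓝[<] δ)

theorem approach_le_cofinite : (approach u β δ : Filter K) ≤ cofinite :=
  (comap_mono ((nhdsLT_le_nhdsNE δ).trans (nhdsNE_le_cofinite δ))).trans (comap_cofinite_le _)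

theorem eventually_valDist_lt (u : AddValuation L (WithTop ℝ)) (β : L) (δ : WithTop ℝ) :
    ∀ᶠ y : K in approach u β δ, valDist u β y < δ :=
  Eventually.comap (p := (· < δ)) eventually_mem_nhdsWithin _

theorem eventually_lt_valDist {c : WithTop ℝ} (hc : c < δ) :
    ∀ᶠ y : K in approach u β δ, c < valDist u β y :=
  Eventually.comap (p := (c < ·)) (nhdsWithin_le_nhds (eventually_gt_nhds hc)) _

theorem exists_valDist_mem_Ioo (hu : ∀ x : K, u (algebraMap K L x) = v x)
    (hΓ : Dense (valueGroup v)) (hb : IsLUB (range (valDist (K := K) u β)) b) {a : WithTop ℝ}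
    (haδ : a < δ) (hδb : δ ≤ b) : ∃ y : K, valDist u β y ∈ Ioo a δ := by
  obtain ⟨g, hg, hag, hgδ⟩ := exists_mem_between_coe hΓ haδ
  obtain ⟨y, hy⟩ := exists_valDist_eq hu hb hg (hgδ.trans_le hδb)
  exact ⟨y, by rwa [hy], by rwa [hy]⟩

theorem approach_neBot (hu : ∀ x : K, u (algebraMap K L x) = v x)
    (hΓ : Dense (valueGroup v)) (hb : IsLUB (range (valDist (K := K) u β)) b) (hδb : δ ≤ b) :
    (approach u β δ : Filter K).NeBot := by
  refine comap_neBot fun t ht => ?_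
  obtain ⟨a, ha, hat⟩ := mem_nhdsLT_iff_exists_Ioo_subset.1 ht
  obtain ⟨y, hy⟩ := exists_valDist_mem_Ioo hu hΓ hb ha hδb
  exact ⟨y, hat hy⟩

theorem exists_tendsto_approach_of_strictMono {s : ℕ → K}
    (hs : StrictMono fun n => valDist u β (s n)) (hb : IsLUB (range (valDist (K := K) u β)) b) :
    ∃ δ ≤ b, Tendsto s atTop (approach u β δ) := by
  obtain ⟨δ, hδ⟩ : ∃ δ, IsLUB (range fun n => valDist u β (s n)) δ :=
    ⟨_, WithTop.isLUB_sSup' (range_nonempty _)⟩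
  have hlt (n : ℕ) : valDist u β (s n) < δ :=
    (hs n.lt_succ_self).trans_le (hδ.1 (mem_range_self _))
  refine ⟨δ, hδ.2 (forall_mem_range.2 fun n => hb.1 (mem_range_self _)), ?_⟩
  exact tendsto_comap_iff.2 (tendsto_nhdsWithin_iff.2
    ⟨tendsto_atTop_isLUB hs.monotone hδ, .of_forall hlt⟩)

theorem exists_strictMono_tendsto_approach (hu : ∀ x : K, u (algebraMap K L x) = v x)
    (hΓ : Dense (valueGroup v)) (hb : IsLUB (range (valDist (K := K) u β)) b) (hδb : δ ≤ b) :
    ∃ s : ℕ → K, StrictMono (fun n => valDist u β (s n)) ∧ Tendsto s atTop (approach u β δ) := by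
  obtain ⟨a, ha, haδ, halim⟩ := exists_seq_strictMono_tendsto δ
  choose s has hsa using fun n =>
    exists_valDist_mem_Ioo hu hΓ hb (ha n.lt_succ_self) ((haδ (n + 1)).le.trans hδb)
  refine ⟨s, strictMono_nat_of_lt_succ fun n => (hsa n).trans (has (n + 1)), ?_⟩
  exact tendsto_comap_iff.2 (tendsto_nhdsWithin_iff.2
    ⟨tendsto_of_tendsto_of_tendsto_of_le_of_le halim (halim.comp (tendsto_add_atTop_nat 1))
      (fun n => (has n).le) fun n => (hsa n).le, .of_forall fun n => (hsa n).trans (haδ (n + 1))⟩)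

theorem isPC_of_strictMono (hu : ∀ x : K, u (algebraMap K L x) = v x) {s : ℕ → K}
    (hs : StrictMono fun n => valDist u β (s n)) : IsPC v s := by
  intro n
  rw [map_sub_eq_of_valDist_lt hu (hs n.lt_succ_self),
    map_sub_eq_of_valDist_lt hu (hs (n + 1).lt_succ_self)]
  exact hs n.lt_succ_self

theorem isBreadth_of_tendsto_approach (hu : ∀ x : K, u (algebraMap K L x) = v x) {s : ℕ → K}
    (hs : StrictMono fun n => valDist u β (s n)) (hδ : Tendsto s atTop (approach u β δ)) :
    IsBreadth v s δ := by
  have hgap (n : ℕ) : v (s (n + 1) - s n) = valDist u β (s n) :=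
    map_sub_eq_of_valDist_lt hu (hs n.lt_succ_self)
  simp only [IsBreadth, hgap]
  exact tendsto_order.1 ((tendsto_comap_iff.1 hδ).mono_right nhdsWithin_le_nhds)

end Approach

section BreadthRing

variable {L : Type*} [Field L] [Algebra K L] [Algebra.IsAlgebraic K L] [IsAlgClosed L]
  {v : AddValuation K (WithTop ℝ)} {u : AddValuation L (WithTop ℝ)} {β : L} {b δ : WithTop ℝ}

/-- The ring `V_E` attached to any pseudo-convergent sequence `E` in `K` with pseudo-limit `β` and
breadth `δ`; see `VESet_eq_breadthRing`. -/
def breadthRing (hu : ∀ x : K, u (algebraMap K L x) = v x) (β : L) (δ : WithTop ℝ) :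
    ValuationSubring (RatFunc K) :=
  valuationSubringAlong v (approach u β δ) approach_le_cofinite
    (decidesSign_of_eventuallyAvoids hu (eventuallyAvoids_comap_nhdsLT _ _ _))

theorem exists_mem_breadthRing_iff (hu : ∀ x : K, u (algebraMap K L x) = v x)
    (hΓ : Dense (valueGroup v)) (hb : IsLUB (range (valDist (K := K) u β)) b) {r : ℝ}
    (hr : r ∈ QGamma v) (hrb : r < b) : ∃ ψ : RatFunc K, ∀ δ ≤ b,
      (ψ ∈ breadthRing hu β δ ↔ r < δ) ∧ (ψ⁻¹ ∈ breadthRing hu β δ ↔ δ ≤ r) := by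
  obtain ⟨m, hm, t, ht⟩ := mem_QGamma_iff.1 hr
  obtain ⟨_, ⟨y, rfl⟩, hy, -⟩ := hb.exists_between hrb
  have ht0 : t ≠ 0 := v.ne_top_iff.1 (ht ▸ WithTop.coe_ne_top)
  let p : K[X] := C t⁻¹ * (X - C y) ^ m
  have hp : p ≠ 0 :=
    mul_ne_zero (C_ne_zero.2 (inv_ne_zero ht0)) (pow_ne_zero m (X_sub_C_ne_zero y))
  let ψ : RatFunc K := algebraMap K[X] (RatFunc K) p
  have hψ : ψ ≠ 0 := RatFunc.algebraMap_ne_zero hp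
  have heval (z : K) : ψ.eval (RingHom.id K) z = (z - y) ^ m / t := by
    rw [RatFunc.eval_algebraMap]
    simp [p, div_eq_inv_mul]
  refine ⟨ψ, fun δ hδb => ?_⟩
  have := approach_neBot hu hΓ hb hδb
  rcases lt_or_ge (r : WithTop ℝ) δ with hδ | hδ
  · have hpos : ∀ᶠ z in approach u β δ, 0 < v (ψ.eval (RingHom.id K) z) := by
      filter_upwards [eventually_lt_valDist hδ] with z hz
      rw [heval]
      exact map_pow_div_pos hm ht (lt_map_sub hu hz hy)
    exact ⟨iff_of_true (hpos.mono fun z hz => hz.le) hδ, iff_of_false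
      (inv_notMem_integersAlong_of_eventually_pos approach_le_cofinite hψ hpos) hδ.not_ge⟩
  · have hneg : ∀ᶠ z in approach u β δ, v (ψ.eval (RingHom.id K) z) < 0 := by
      filter_upwards [eventually_valDist_lt u β δ] with z hz
      have hzr : valDist u β z < r := hz.trans_le hδ
      rw [heval]
      exact map_pow_div_neg hm ht (by rwa [map_sub_eq_of_valDist_gt hu (hzr.trans hy)])
    exact ⟨iff_of_false (notMem_integersAlong_of_eventually_neg hneg) hδ.not_gt, iff_of_true
      (inv_mem_integersAlong_of_eventually_neg approach_le_cofinite hneg) hδ⟩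

theorem breadthRing_injOn (hu : ∀ x : K, u (algebraMap K L x) = v x)
    (hΓ : Dense (valueGroup v)) (hb : IsLUB (range (valDist (K := K) u β)) b) :
    InjOn (breadthRing hu β) (Iic b) := by
  have hne {γ δ : WithTop ℝ} (hγδ : γ < δ) (hδb : δ ≤ b) :
      breadthRing hu β γ ≠ breadthRing hu β δ := by
    obtain ⟨r, hr, hγr, hrδ⟩ := exists_mem_between_coe hΓ hγδ
    obtain ⟨ψ, hψ⟩ := exists_mem_breadthRing_iff hu hΓ hb (valueGroup_subset_QGamma v hr)
      (hrδ.trans_le hδb)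
    intro heq
    have hmem := (hψ δ hδb).1.2 hrδ
    rw [← heq, (hψ γ (hγδ.le.trans hδb)).1] at hmem
    exact hmem.not_gt hγr
  intro γ hγ δ hδ heq
  by_contra h
  rcases lt_or_gt_of_ne h with h | h
  · exact hne h hδ heq
  · exact hne h hγ heq.symm

theorem mem_breadthRing_of_forall_nonneg {hu : ∀ x : K, u (algebraMap K L x) = v x}
    {α γ lam : WithTop ℝ} {φ : RatFunc K} (hαγ : α < γ) (hγlam : γ ≤ lam)
    (h : ∀ y, valDist u β y ∈ Ioo α lam → 0 ≤ v (φ.eval (RingHom.id K) y)) :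
    φ ∈ breadthRing hu β γ := by
  filter_upwards [eventually_lt_valDist hαγ, eventually_valDist_lt u β γ] with y hαy hyγ
  exact h y ⟨hαy, hyγ.trans_le hγlam⟩

theorem exists_forall_nonneg_of_mem_breadthRing (hu : ∀ x : K, u (algebraMap K L x) = v x)
    (hΓ : Dense (valueGroup v)) (hb : IsLUB (range (valDist (K := K) u β)) b) (hδb : δ ≤ b)
    {φ : RatFunc K} (hφ : φ ∈ breadthRing hu β δ) :
    ∃ α < δ, ∃ lam ≥ δ, (lam = ⊤ ∨ ∃ r ∈ QGamma v, lam = (r : WithTop ℝ)) ∧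
      ∀ y, valDist u β y ∈ Ioo α lam → 0 ≤ v (φ.eval (RingHom.id K) y) := by
  by_cases hδ : δ = ⊤ ∨ ∃ r ∈ QGamma v, δ = (r : WithTop ℝ)
  · obtain ⟨α, hα, hsub⟩ := mem_nhdsLT_iff_exists_Ioo_subset.1 (eventually_comap.1 hφ)
    exact ⟨α, hα, δ, le_rfl, hδ, fun y hy => hsub hy y rfl⟩
  push Not at hδ
  obtain ⟨hδtop, hδΓ⟩ := hδ
  lift δ to ℝ using hδtop
  have := approach_neBot hu hΓ hb hδb
  -- No value of `ℚΓ_v` sits at `δ`, so signs are decided on both sides of `δ` at once.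
  have hsign : DecidesSign v (comap (valDist u β) (𝓝 (δ : WithTop ℝ))) :=
    decidesSign_of_eventuallyAvoids hu
      (eventuallyAvoids_comap_nhds _ fun hmem => hδΓ δ hmem rfl)
  have hφ' : φ ∈ integersAlong v (comap (valDist u β) (𝓝 (δ : WithTop ℝ))) :=
    integersAlong_eq_of_le (G := approach u β δ) hsign (comap_mono nhdsWithin_le_nhds) ▸ hφ
  obtain ⟨α, c, ⟨hα, hc⟩, hsub⟩ := (mem_nhds_iff_exists_Ioo_subset' (exists_lt _)
    ⟨_, WithTop.coe_lt_top δ⟩).1 (eventually_comap.1 hφ')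
  obtain ⟨r, hr, hδr, hrc⟩ := exists_mem_between_coe hΓ hc
  exact ⟨α, hα, r, hδr.le, .inr ⟨r, valueGroup_subset_QGamma v hr, rfl⟩,
    fun y hy => hsub ⟨hy.1, hy.2.trans hrc⟩ y rfl⟩

theorem isOpen_setOf_mem_breadthRing (hu : ∀ x : K, u (algebraMap K L x) = v x)
    (hΓ : Dense (valueGroup v)) (hb : IsLUB (range (valDist (K := K) u β)) b) (φ : RatFunc K) :
    IsOpen[upperTopWT b (QGamma v)] {γ : {γ // γ ≤ b} | φ ∈ breadthRing hu β γ} := by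
  let _ := upperTopWT b (QGamma v)
  refine isOpen_iff_forall_mem_open.2 fun γ hγ => ?_
  obtain ⟨α, hα, lam, hlam, hlamΓ, hnonneg⟩ :=
    exists_forall_nonneg_of_mem_breadthRing hu hΓ hb γ.2 hγ
  exact ⟨{γ' | α < (γ' : WithTop ℝ) ∧ (γ' : WithTop ℝ) ≤ lam},
    fun γ' hγ' => mem_breadthRing_of_forall_nonneg hγ'.1 hγ'.2 hnonneg,
    isOpen_generateFrom_of_mem ⟨α, lam, hα.le.trans γ.2, hlamΓ, rfl⟩, hα, hlam⟩

theorem isOpen_lt_of_isOpen_mem_breadthRing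
    (t : TopologicalSpace {γ : WithTop ℝ // γ ≤ b}) (hu : ∀ x : K, u (algebraMap K L x) = v x)
    (hΓ : Dense (valueGroup v)) (hb : IsLUB (range (valDist (K := K) u β)) b)
    (h : ∀ φ : RatFunc K, IsOpen[t] {γ : {γ // γ ≤ b} | φ ∈ breadthRing hu β γ})
    (α : WithTop ℝ) : IsOpen[t] {γ : {γ // γ ≤ b} | α < (γ : WithTop ℝ)} := by
  refine isOpen_iff_forall_mem_open.2 fun γ hγ => ?_
  obtain ⟨r, hr, hαr, hrγ⟩ := exists_mem_between_coe hΓ hγ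
  obtain ⟨ψ, hψ⟩ := exists_mem_breadthRing_iff hu hΓ hb (valueGroup_subset_QGamma v hr)
    (hrγ.trans_le γ.2)
  exact ⟨_, fun γ' hγ' => hαr.trans ((hψ γ' γ'.2).1.1 hγ'), h ψ, (hψ γ γ.2).1.2 hrγ⟩

theorem isOpen_le_of_isOpen_mem_breadthRing
    (t : TopologicalSpace {γ : WithTop ℝ // γ ≤ b}) (hu : ∀ x : K, u (algebraMap K L x) = v x)
    (hΓ : Dense (valueGroup v)) (hb : IsLUB (range (valDist (K := K) u β)) b)
    (h : ∀ φ : RatFunc K, IsOpen[t] {γ : {γ // γ ≤ b} | φ ∈ breadthRing hu β γ})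
    {lam : WithTop ℝ} (hlam : lam = ⊤ ∨ ∃ r ∈ QGamma v, lam = (r : WithTop ℝ)) :
    IsOpen[t] {γ : {γ // γ ≤ b} | (γ : WithTop ℝ) ≤ lam} := by
  rcases le_or_gt b lam with hb_le | hlam_lt
  · convert isOpen_univ
    exact eq_univ_of_forall fun γ => γ.2.trans hb_le
  · obtain ⟨r, hr, rfl⟩ := hlam.resolve_left (ne_top_of_lt hlam_lt)
    obtain ⟨ψ, hψ⟩ := exists_mem_breadthRing_iff hu hΓ hb hr hlam_lt
    convert h ψ⁻¹ using 3 with γ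
    exact (hψ γ γ.2).2.symm

theorem induced_breadthRing_zarTop (hu : ∀ x : K, u (algebraMap K L x) = v x)
    (hΓ : Dense (valueGroup v)) (hb : IsLUB (range (valDist (K := K) u β)) b) :
    (zarTop (RatFunc K)).induced (fun γ : {γ // γ ≤ b} => breadthRing hu β γ) =
      upperTopWT b (QGamma v) := by
  apply le_antisymm
  · refine le_generateFrom ?_
    rintro _ ⟨α, lam, -, hlam, rfl⟩
    let t := (zarTop (RatFunc K)).induced (fun γ : {γ // γ ≤ b} => breadthRing hu β γ)
    have hmem (φ : RatFunc K) : IsOpen[t] {γ : {γ // γ ≤ b} | φ ∈ breadthRing hu β γ} :=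
      isOpen_induced (t := zarTop (RatFunc K)) (isOpen_generateFrom_of_mem ⟨φ, rfl⟩)
    exact (isOpen_lt_of_isOpen_mem_breadthRing t hu hΓ hb hmem α).inter
      (isOpen_le_of_isOpen_mem_breadthRing t hu hΓ hb hmem hlam)
  · rw [zarTop, induced_generateFrom_eq]
    refine le_generateFrom ?_
    rintro _ ⟨_, ⟨φ, rfl⟩, rfl⟩
    exact isOpen_setOf_mem_breadthRing hu hΓ hb φ

theorem VESet_eq_breadthRing (hu : ∀ x : K, u (algebraMap K L x) = v x) {s : ℕ → K}
    (hδ : Tendsto s atTop (approach u β δ)) :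
    VESet v s = (breadthRing hu β δ : Set (RatFunc K)) :=
  integersAlong_eq_of_le (decidesSign_of_eventuallyAvoids hu (eventuallyAvoids_comap_nhdsLT _ _ _))
    hδ

end BreadthRing

section PseudoLimits

variable {v : AddValuation K (WithTop ℝ)} {u : AddValuation (AlgebraicClosure K) (WithTop ℝ)}
  {β : AlgebraicClosure K} {b : WithTop ℝ}

theorem isPCLimitAC_iff_strictMono {s : ℕ → K} :
    IsPCLimitAC u s β ↔ StrictMono fun n => valDist u β (s n) :=
  ⟨fun h => strictMono_nat_of_lt_succ h, fun h n => h n.lt_succ_self⟩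

theorem range_breadthRing (hu : ∀ x : K, u (algebraMap K (AlgebraicClosure K) x) = v x)
    (hΓ : Dense (valueGroup v)) (hb : IsLUB (range (valDist (K := K) u β)) b) :
    range (fun γ : {γ // γ ≤ b} => breadthRing hu β γ) = VVβ v u β := by
  ext W
  constructor
  · rintro ⟨γ, rfl⟩
    obtain ⟨s, hs, hγ⟩ := exists_strictMono_tendsto_approach hu hΓ hb γ.2
    exact ⟨s, isPC_of_strictMono hu hs, isPCLimitAC_iff_strictMono.2 hs,
      (VESet_eq_breadthRing hu hγ).symm⟩
  · rintro ⟨s, -, hs, hW⟩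
    obtain ⟨δ, hδb, hδ⟩ :=
      exists_tendsto_approach_of_strictMono (isPCLimitAC_iff_strictMono.1 hs) hb
    exact ⟨⟨δ, hδb⟩, SetLike.coe_injective ((hW.trans (VESet_eq_breadthRing hu hδ)).symm)⟩

theorem isBreadth_of_VESet_eq (hu : ∀ x : K, u (algebraMap K (AlgebraicClosure K) x) = v x)
    (hΓ : Dense (valueGroup v)) (hb : IsLUB (range (valDist (K := K) u β)) b) {s : ℕ → K}
    (hs : IsPCLimitAC u s β) {γ : WithTop ℝ} (hγ : γ ≤ b)
    (hVE : (breadthRing hu β γ : Set (RatFunc K)) = VESet v s) : IsBreadth v s γ := by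
  have hs := isPCLimitAC_iff_strictMono.1 hs
  obtain ⟨δ, hδb, hδ⟩ := exists_tendsto_approach_of_strictMono hs hb
  have hring : breadthRing hu β γ = breadthRing hu β δ :=
    SetLike.coe_injective (hVE.trans (VESet_eq_breadthRing hu hδ))
  rw [breadthRing_injOn hu hΓ hb hγ hδb hring]
  exact isBreadth_of_tendsto_approach hu hs hδ

end PseudoLimits

/-- If `V` is not discrete, the map `Σ_β : 𝒱(β,•) → (-∞, δ(β,K)]`,
`V_E ↦ δ_E`, is a homeomorphism onto the interval `(-∞, δ(β,K)]` endowed with the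
`ℚΓ_v`-upper limit topology. -/
theorem statement9 (v : AddValuation K (WithTop ℝ)) (hv : IsRankOne v)
    (hnd : Dense (valueGroup v))
    (u : AddValuation (AlgebraicClosure K) (WithTop ℝ))
    (hu : ∀ x : K, u (algebraMap K (AlgebraicClosure K) x) = v x)
    (β : AlgebraicClosure K) (δβK : WithTop ℝ)
    (hδβK : IsLUB {γ : WithTop ℝ | ∃ x : K,
      γ = u (β - algebraMap K (AlgebraicClosure K) x)} δβK) :
    ∃ Sb : ↥(VVβ v u β) → {γ : WithTop ℝ // γ ≤ δβK},
      (∀ (W : ↥(VVβ v u β)) (s : ℕ → K), IsPC v s → IsPCLimitAC u s β →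
        ((W : ValuationSubring (RatFunc K)) : Set (RatFunc K)) = VESet v s →
        IsBreadth v s (Sb W : WithTop ℝ)) ∧
      @IsHomeomorph _ _ (zarSub (VVβ v u β)) (upperTopWT δβK (QGamma v)) Sb := by
  have hb : IsLUB (range (valDist (K := K) u β)) δβK := by
    simpa only [range, valDist, eq_comm] using hδβK
  let _ := upperTopWT δβK (QGamma v)
  let _ := zarTop (RatFunc K)
  have hemb : IsEmbedding fun γ : {γ // γ ≤ δβK} => breadthRing hu β γ :=
    ⟨⟨(induced_breadthRing_zarTop hu hnd hb).symm⟩,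
      injOn_iff_injective.1 (breadthRing_injOn hu hnd hb)⟩
  rw [← range_breadthRing hu hnd hb]
  refine ⟨hemb.toHomeomorph.symm, fun W s _ hs hW => ?_, hemb.toHomeomorph.symm.isHomeomorph⟩
  obtain ⟨γ, rfl⟩ := hemb.toHomeomorph.surjective W
  rw [Homeomorph.symm_apply_apply]
  exact isBreadth_of_VESet_eq hu hnd hb hs γ.2 hW

end PaperPCZar
end
end
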